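/- Let n ≥ 0, ℓ ≥ 1, let κ ∈ Z^ℓ be any multicharge, let e ≥ 2 be an integer, let λ be an ℓ-multipartition of n and let i ∈ (Z/eZ)^n. Then deg_{e,i}(λ) = Σ_{t ∈ Std(λ), res(t) = i} deg_e(t) ≥ 0. -/

import Mathlib

open scoped BigOperators
open scoped Classical

namespace Paper

/-! ## Quantum integers -/

/-- The quantum integer `[d]_x` in a field, for `d ∈ ℤ`. -/
noncomputable def qint {K : Type*} [Field K] (x : K) (d : ℤ) : K :=
  if 0 ≤ d then ∑ k ∈ Finset.range d.toNat, x ^ k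
  else -∑ k ∈ Finset.range (-d).toNat, x ^ (-((k : ℤ) + 1))

/-- The quantum integer `[d]_t` in a commutative ring, for an invertible `t` and `d ∈ ℤ`. -/
def qintU {O : Type*} [CommRing O] (t : Oˣ) (d : ℤ) : O :=
  if 0 ≤ d then ∑ k ∈ Finset.range d.toNat, (t : O) ^ k
  else -∑ k ∈ Finset.range (-d).toNat, ((t ^ (-((k : ℤ) + 1)) : Oˣ) : O)

/-! ## Nodes, multipartitions and standard tableaux -/

/-- A node `(l, r, c)`: component `l`, row `r`, column `c` (all `0`-based). -/
abbrev Node : Type := ℕ × ℕ × ℕ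

/-- `nodeBelow A B` holds when `B` is strictly below `A`, i.e. `A < B` lexicographically. -/
def nodeBelow (A B : Node) : Prop :=
  A.1 < B.1 ∨ (A.1 = B.1 ∧ (A.2.1 < B.2.1 ∨ (A.2.1 = B.2.1 ∧ A.2.2 < B.2.2)))

/-- An `ℓ`-multipartition of `n`. -/
structure Multipartition (ℓ n : ℕ) : Type where
  part : ℕ → ℕ → ℕ
  comp_bound : ∀ l, ℓ ≤ l → ∀ r, part l r = 0
  antitone : ∀ l, Antitone (part l)
  row_bound : ∀ l r, n ≤ r → part l r = 0
  size : (∑ l ∈ Finset.range ℓ, ∑ r ∈ Finset.range n, part l r) = n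

/-- The diagram of a multipartition. -/
def Multipartition.diagram {ℓ n : ℕ} (μ : Multipartition ℓ n) : Set Node :=
  {A | A.2.2 < μ.part A.1 A.2.1}

/-- A standard tableau: a bijection from the diagram of its shape onto `{1, …, n}`
that increases along rows and down columns of each component (it takes the value
`0` off the diagram, so that it is determined by its entries). -/
structure StdTableau (ℓ n : ℕ) : Type where
  shape : Multipartition ℓ n
  entry : Node → ℕ
  entry_zero : ∀ A, A ∉ shape.diagram → entry A = 0
  bijOn : Set.BijOn entry shape.diagram (Set.Icc 1 n)
  row_inc : ∀ l r c, (l, r, c + 1) ∈ shape.diagram → entry (l, r, c) < entry (l, r, c + 1)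
  col_inc : ∀ l r c, (l, r + 1, c) ∈ shape.diagram → entry (l, r, c) < entry (l, r + 1, c)

/-- The node of a standard tableau containing the entry `k`. -/
noncomputable def StdTableau.node {ℓ n : ℕ} (T : StdTableau ℓ n) (k : ℕ) : Node :=
  Function.invFunOn T.entry T.shape.diagram k

/-- The content `c_k(T) = κ_l + c - r` of the entry `k` in the tableau `T`
(`1 ≤ k ≤ n`). -/
noncomputable def content {ℓ n : ℕ} (κ : ℕ → ℤ) (T : StdTableau ℓ n) (k : ℕ) : ℤ :=
  κ (T.node k).1 + ((T.node k).2.2 : ℤ) - ((T.node k).2.1 : ℤ)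

/-- The residue sequence of a standard tableau, in `I^n` with `I = ℤ/eℤ`. -/
noncomputable def resSeq {ℓ n : ℕ} (e : ℕ) (κ : ℕ → ℤ) (T : StdTableau ℓ n) :
    Fin n → ZMod e :=
  fun k => ((content κ T (k.1 + 1) : ℤ) : ZMod e)

/-- The residue of a node. -/
def resNode (e : ℕ) (κ : ℕ → ℤ) (A : Node) : ZMod e :=
  ((κ A.1 + (A.2.2 : ℤ) - (A.2.1 : ℤ) : ℤ) : ZMod e)

/-- A set of nodes is the diagram of a multipartition (with at most `ℓ` components)
iff it is finite and downward closed in rows and columns. -/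
def IsDiagramSet (ℓ : ℕ) (S : Set Node) : Prop :=
  S.Finite ∧ (∀ A ∈ S, A.1 < ℓ) ∧
    (∀ l r c, (l, r, c + 1) ∈ S → (l, r, c) ∈ S) ∧
    (∀ l r c, (l, r + 1, c) ∈ S → (l, r, c) ∈ S)

/-- `A` is an addable node of the diagram `S`. -/
def Addable (ℓ : ℕ) (S : Set Node) (A : Node) : Prop :=
  A ∉ S ∧ IsDiagramSet ℓ (S ∪ {A})

/-- `A` is a removable node of the diagram `S`. -/
def Removable (ℓ : ℕ) (S : Set Node) (A : Node) : Prop :=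
  A ∈ S ∧ IsDiagramSet ℓ (S \ {A})

/-- `d_A(S)`: the number of addable nodes of `S` of the same residue as `A` strictly
below `A`, minus the number of removable ones. -/
noncomputable def dNode (ℓ e : ℕ) (κ : ℕ → ℤ) (S : Set Node) (A : Node) : ℤ :=
  (Set.ncard {B | Addable ℓ S B ∧ resNode e κ B = resNode e κ A ∧ nodeBelow A B} : ℤ) -
    (Set.ncard {B | Removable ℓ S B ∧ resNode e κ B = resNode e κ A ∧ nodeBelow A B} : ℤ)

/-- The Brundan–Kleshchev–Wang degree `deg_e(T)` of a standard tableau, written as the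
telescoping sum of the recursion `deg_e(T) = deg_e(T↓(n-1)) + d_A(Shape(T))`. -/
noncomputable def degE {ℓ n : ℕ} (e : ℕ) (κ : ℕ → ℤ) (T : StdTableau ℓ n) : ℤ :=
  ∑ m ∈ Finset.Icc 1 n,
    dNode ℓ e κ {A | A ∈ T.shape.diagram ∧ T.entry A ≤ m} (T.node m)

/-- The restriction of the diagram of `T` to entries `≤ m` (the diagram of `Shape(T↓m)`). -/
def restDiag {ℓ n : ℕ} (T : StdTableau ℓ n) (m : ℕ) : Set Node :=
  {A | A ∈ T.shape.diagram ∧ T.entry A ≤ m}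

/-- Dominance order on standard tableaux: `domTab S T` iff `S ⊵ T`. -/
def domTab {ℓ n : ℕ} (S T : StdTableau ℓ n) : Prop :=
  ∀ m l i : ℕ,
    Set.ncard {A | A ∈ restDiag T m ∧ (A.1 < l ∨ (A.1 = l ∧ A.2.1 ≤ i))} ≤
      Set.ncard {A | A ∈ restDiag S m ∧ (A.1 < l ∨ (A.1 = l ∧ A.2.1 ≤ i))}

/-- Interchange the entries `r` and `r + 1` in an entry function. -/
def swapEntry (f : Node → ℕ) (r : ℕ) : Node → ℕ :=
  fun A => if f A = r then r + 1 else if f A = r + 1 then r else f A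

/-- `ρ_r(T) = c_r(T) - c_{r+1}(T)`, the axial distance. -/
noncomputable def rhoTab {ℓ n : ℕ} (κ : ℕ → ℤ) (T : StdTableau ℓ n) (r : ℕ) : ℤ :=
  content κ T r - content κ T (r + 1)

/-- The entry function of the row-reading initial tableau `t^λ`. -/
noncomputable def tlamEntry {ℓ n : ℕ} (μ : Multipartition ℓ n) (A : Node) : ℕ :=
  if A ∈ μ.diagram then
    (∑ l ∈ Finset.range A.1, ∑ r ∈ Finset.range n, μ.part l r) +
      (∑ r ∈ Finset.range A.2.1, μ.part A.1 r) + A.2.2 + 1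
  else 0

/-- The finite set of possible contents of standard tableaux of size `n`. -/
noncomputable def contFinset (ℓ n : ℕ) (κ : ℕ → ℤ) : Finset ℤ :=
  ((Finset.range ℓ ×ˢ Finset.range n ×ˢ Finset.range n).image
      (fun x => κ x.1 + (x.2.2 : ℤ) - (x.2.1 : ℤ))).filter
    (fun c => ∃ T : StdTableau ℓ n, ∃ k, 1 ≤ k ∧ k ≤ n ∧ content κ T k = c)

/-- The standard tableau (if any) obtained from `T` by interchanging the entries
`r` and `r + 1`; i.e. `T·s_r` if it is standard, and `none` otherwise. -/
noncomputable def oSwapO {ℓ n : ℕ} (T : StdTableau ℓ n) (r : ℕ) :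
    Option (StdTableau ℓ n) :=
  if h : ∃ V : StdTableau ℓ n, V.entry = swapEntry T.entry r then some (Classical.choose h)
  else none

/-- `oSwap` extended to `Option`. -/
noncomputable def oSwap {ℓ n : ℕ} (X : Option (StdTableau ℓ n)) (r : ℕ) :
    Option (StdTableau ℓ n) :=
  X.bind fun T => oSwapO T r

/-- Evaluate a seminormal coefficient system on an optional tableau (by `0` if none). -/
noncomputable def aE {ℓ n : ℕ} {K : Type*} [Field K] (α : ℕ → StdTableau ℓ n → K) (r : ℕ)
    (X : Option (StdTableau ℓ n)) : K :=
  X.elim 0 (α r)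

/-! ## Separation and idempotent subrings -/

/-- `(K, t)` separates `Std(P_n)` (field version):
`[n]!_t ∏_{1 ≤ l < m ≤ ℓ} ∏_{-n < d < n} [κ_l - κ_m + d]_t ≠ 0`. -/
def SeparatesF {K : Type*} [Field K] (t : Kˣ) (n ℓ : ℕ) (κ : ℕ → ℤ) : Prop :=
  ((∏ d ∈ Finset.Icc 1 n, qint (t : K) (d : ℤ)) *
      ∏ l ∈ Finset.range ℓ, ∏ m ∈ Finset.Ioo l ℓ,
        ∏ d ∈ Finset.Ioo (-(n : ℤ)) (n : ℤ), qint (t : K) (κ l - κ m + d)) ≠ 0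

/-- `(O, t)` separates `Std(P_n)` (subring version): the separation element is a unit. -/
def SeparatesU {O : Type*} [CommRing O] (t : Oˣ) (n ℓ : ℕ) (κ : ℕ → ℤ) : Prop :=
  IsUnit ((∏ d ∈ Finset.Icc 1 n, qintU t (d : ℤ)) *
      ∏ l ∈ Finset.range ℓ, ∏ m ∈ Finset.Ioo l ℓ,
        ∏ d ∈ Finset.Ioo (-(n : ℤ)) (n : ℤ), qintU t (κ l - κ m + d))

/-- `(O, t)` is an `e`-idempotent subring of the field `K`. -/
def IsIdempotentSubring {K : Type*} [Field K] (O : Subring K) (t : Oˣ) (e n ℓ : ℕ)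
    (κ : ℕ → ℤ) : Prop :=
  SeparatesU t n ℓ κ ∧
    (∀ k : ℤ, ¬(e : ℤ) ∣ k → IsUnit (qintU t k)) ∧
    (∀ k : ℤ, (e : ℤ) ∣ k → qintU t k ∈ Ideal.jacobson (⊥ : Ideal O))

/-! ## The cyclotomic Hecke algebra, by generators and relations -/

/-- Generators `L_1, …, L_n`, `T_1, …, T_{n-1}` (here `0`-based). -/
inductive HeckeGen (n : ℕ) : Type
  | L : Fin n → HeckeGen n
  | T : Fin (n - 1) → HeckeGen n

/-- The position `r` of the pair `(r, r+1)` interchanged by the `r`-th transposition. -/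
def pL {n : ℕ} (r : Fin (n - 1)) : Fin n := ⟨r.1, by have := r.2; omega⟩

/-- The position `r + 1` of the pair interchanged by the `r`-th transposition. -/
def pR {n : ℕ} (r : Fin (n - 1)) : Fin n := ⟨r.1 + 1, by have := r.2; omega⟩

/-- The position `r + 2`, used in braid relations. -/
def pM {n : ℕ} (r : Fin (n - 1)) (hr : r.1 + 1 < n - 1) : Fin n := ⟨r.1 + 2, by omega⟩

/-- The free algebra generator `L_k`. -/
def hL (R : Type*) [CommRing R] {n : ℕ} (k : Fin n) : FreeAlgebra R (HeckeGen n) :=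
  FreeAlgebra.ι R (HeckeGen.L k)

/-- The free algebra generator `T_r`. -/
def hT (R : Type*) [CommRing R] {n : ℕ} (r : Fin (n - 1)) : FreeAlgebra R (HeckeGen n) :=
  FreeAlgebra.ι R (HeckeGen.T r)

/-- The defining relations of the integral cyclotomic Hecke algebra `H_n(R, t, κ)`. -/
inductive HeckeRel (R : Type*) [CommRing R] (t : Rˣ) (n ℓ : ℕ) (κ : ℕ → ℤ) :
    FreeAlgebra R (HeckeGen n) → FreeAlgebra R (HeckeGen n) → Prop
  | cyc (h : 0 < n) :
      HeckeRel R t n ℓ κ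
        (((List.range ℓ).map fun l =>
          hL R (⟨0, h⟩ : Fin n) - algebraMap R _ (qintU t (κ l))).prod) 0
  | quad (r : Fin (n - 1)) :
      HeckeRel R t n ℓ κ ((hT R r + 1) * (hT R r - algebraMap R _ (t : R))) 0
  | LL (k m : Fin n) : HeckeRel R t n ℓ κ (hL R k * hL R m) (hL R m * hL R k)
  | TTfar (r s : Fin (n - 1)) (h : r.1 + 1 < s.1 ∨ s.1 + 1 < r.1) :
      HeckeRel R t n ℓ κ (hT R r * hT R s) (hT R s * hT R r)
  | braid (r s : Fin (n - 1)) (h : s.1 = r.1 + 1) :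
      HeckeRel R t n ℓ κ (hT R r * hT R s * hT R r) (hT R s * hT R r * hT R s)
  | TL (r : Fin (n - 1)) (k : Fin n) (h : k.1 ≠ r.1 ∧ k.1 ≠ r.1 + 1) :
      HeckeRel R t n ℓ κ (hT R r * hL R k) (hL R k * hT R r)
  | LT (r : Fin (n - 1)) :
      HeckeRel R t n ℓ κ (hL R (pR r) * (hT R r - algebraMap R _ (t : R) + 1))
        (hT R r * hL R (pL r) + 1)

/-- The integral cyclotomic Hecke algebra of type `A`, `H_n(R, t, κ)`. -/
noncomputable abbrev CycHecke (R : Type*) [CommRing R] (t : Rˣ) (n ℓ : ℕ) (κ : ℕ → ℤ) :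
    Type _ :=
  RingQuot (HeckeRel R t n ℓ κ)

/-- The generator `L_k` of the cyclotomic Hecke algebra. -/
noncomputable def Lgen (R : Type*) [CommRing R] (t : Rˣ) (n ℓ : ℕ) (κ : ℕ → ℤ)
    (k : Fin n) : CycHecke R t n ℓ κ :=
  RingQuot.mkAlgHom R (HeckeRel R t n ℓ κ) (hL R k)

/-- The generator `T_r` of the cyclotomic Hecke algebra. -/
noncomputable def Tgen (R : Type*) [CommRing R] (t : Rˣ) (n ℓ : ℕ) (κ : ℕ → ℤ)
    (r : Fin (n - 1)) : CycHecke R t n ℓ κ :=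
  RingQuot.mkAlgHom R (HeckeRel R t n ℓ κ) (hT R r)

end Paper
/-! ## Quiver Hecke (KLR) algebras, by generators and relations -/

namespace Paper

/-- Generators `e(i)` (`i ∈ I^n`), `ψ_1, …, ψ_{n-1}`, `y_1, …, y_n` (here `0`-based). -/
inductive KLRGen (n e : ℕ) : Type
  | idem : (Fin n → ZMod e) → KLRGen n e
  | psi : Fin (n - 1) → KLRGen n e
  | y : Fin n → KLRGen n e

/-- The free algebra generator `e(i)`. -/
def kE (R : Type*) [CommRing R] {n e : ℕ} (i : Fin n → ZMod e) :
    FreeAlgebra R (KLRGen n e) :=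
  FreeAlgebra.ι R (KLRGen.idem i)

/-- The free algebra generator `ψ_r`. -/
def kPsi (R : Type*) [CommRing R] {n e : ℕ} (r : Fin (n - 1)) :
    FreeAlgebra R (KLRGen n e) :=
  FreeAlgebra.ι R (KLRGen.psi r)

/-- The free algebra generator `y_k`. -/
def kY (R : Type*) [CommRing R] {n e : ℕ} (k : Fin n) : FreeAlgebra R (KLRGen n e) :=
  FreeAlgebra.ι R (KLRGen.y k)

/-- `s_r · i`: interchange the entries of `i` at positions `r` and `r + 1`. -/
def swapSeq {n e : ℕ} (i : Fin n → ZMod e) (r : Fin (n - 1)) : Fin n → ZMod e :=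
  fun k => if k = pL r then i (pR r) else if k = pR r then i (pL r) else i k

/-- The defining relations of the cyclotomic quiver Hecke algebra `R_n^Λ(R)` where
`Λ = Σ_l Λ_{κ_l mod e}`. -/
inductive KLRRel (R : Type*) [CommRing R] (n e ℓ : ℕ) [NeZero e] (κ : ℕ → ℤ) :
    FreeAlgebra R (KLRGen n e) → FreeAlgebra R (KLRGen n e) → Prop
  | cyc (h : 0 < n) (i : Fin n → ZMod e) :
      KLRRel R n e ℓ κ
        ((kY R (⟨0, h⟩ : Fin n)) ^
            (((Finset.range ℓ).filter fun l => ((κ l : ZMod e) = i ⟨0, h⟩)).card) *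
          kE R i) 0
  | orth (i j : Fin n → ZMod e) (h : i ≠ j) : KLRRel R n e ℓ κ (kE R i * kE R j) 0
  | idem (i : Fin n → ZMod e) : KLRRel R n e ℓ κ (kE R i * kE R i) (kE R i)
  | complete : KLRRel R n e ℓ κ (∑ i : Fin n → ZMod e, kE R i) 1
  | yE (k : Fin n) (i : Fin n → ZMod e) :
      KLRRel R n e ℓ κ (kY R k * kE R i) (kE R i * kY R k)
  | psiE (r : Fin (n - 1)) (i : Fin n → ZMod e) :
      KLRRel R n e ℓ κ (kPsi R r * kE R i) (kE R (swapSeq i r) * kPsi R r)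
  | yy (k m : Fin n) : KLRRel R n e ℓ κ (kY R k * kY R m) (kY R m * kY R k)
  | psiyEq (r : Fin (n - 1)) (i : Fin n → ZMod e) (h : i (pL r) = i (pR r)) :
      KLRRel R n e ℓ κ (kPsi R r * kY R (pR r) * kE R i)
        ((kY R (pL r) * kPsi R r + 1) * kE R i)
  | psiyNe (r : Fin (n - 1)) (i : Fin n → ZMod e) (h : i (pL r) ≠ i (pR r)) :
      KLRRel R n e ℓ κ (kPsi R r * kY R (pR r) * kE R i)
        (kY R (pL r) * kPsi R r * kE R i)
  | ypsiEq (r : Fin (n - 1)) (i : Fin n → ZMod e) (h : i (pL r) = i (pR r)) :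
      KLRRel R n e ℓ κ (kY R (pR r) * kPsi R r * kE R i)
        ((kPsi R r * kY R (pL r) + 1) * kE R i)
  | ypsiNe (r : Fin (n - 1)) (i : Fin n → ZMod e) (h : i (pL r) ≠ i (pR r)) :
      KLRRel R n e ℓ κ (kY R (pR r) * kPsi R r * kE R i)
        (kPsi R r * kY R (pL r) * kE R i)
  | psiyFar (r : Fin (n - 1)) (k : Fin n) (h : k.1 ≠ r.1 ∧ k.1 ≠ r.1 + 1) :
      KLRRel R n e ℓ κ (kPsi R r * kY R k) (kY R k * kPsi R r)
  | psipsiFar (r s : Fin (n - 1)) (h : r.1 + 1 < s.1 ∨ s.1 + 1 < r.1) :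
      KLRRel R n e ℓ κ (kPsi R r * kPsi R s) (kPsi R s * kPsi R r)
  | quadEq (r : Fin (n - 1)) (i : Fin n → ZMod e) (h : i (pL r) = i (pR r)) :
      KLRRel R n e ℓ κ (kPsi R r ^ 2 * kE R i) 0
  | quadR (r : Fin (n - 1)) (i : Fin n → ZMod e)
      (h1 : i (pR r) = i (pL r) + 1) (h2 : i (pL r) ≠ i (pR r) + 1) :
      KLRRel R n e ℓ κ (kPsi R r ^ 2 * kE R i) ((kY R (pL r) - kY R (pR r)) * kE R i)
  | quadL (r : Fin (n - 1)) (i : Fin n → ZMod e)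
      (h1 : i (pL r) = i (pR r) + 1) (h2 : i (pR r) ≠ i (pL r) + 1) :
      KLRRel R n e ℓ κ (kPsi R r ^ 2 * kE R i) ((kY R (pR r) - kY R (pL r)) * kE R i)
  | quadBoth (r : Fin (n - 1)) (i : Fin n → ZMod e)
      (h1 : i (pR r) = i (pL r) + 1) (h2 : i (pL r) = i (pR r) + 1) :
      KLRRel R n e ℓ κ (kPsi R r ^ 2 * kE R i)
        ((kY R (pR r) - kY R (pL r)) * (kY R (pL r) - kY R (pR r)) * kE R i)
  | quadNone (r : Fin (n - 1)) (i : Fin n → ZMod e) (h1 : i (pL r) ≠ i (pR r))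
      (h2 : i (pR r) ≠ i (pL r) + 1) (h3 : i (pL r) ≠ i (pR r) + 1) :
      KLRRel R n e ℓ κ (kPsi R r ^ 2 * kE R i) (kE R i)
  | braidR (r : Fin (n - 1)) (hr : r.1 + 1 < n - 1) (i : Fin n → ZMod e)
      (h0 : i (pM r hr) = i (pL r)) (h1 : i (pR r) = i (pL r) + 1)
      (h2 : i (pL r) ≠ i (pR r) + 1) :
      KLRRel R n e ℓ κ (kPsi R r * kPsi R ⟨r.1 + 1, hr⟩ * kPsi R r * kE R i)
        ((kPsi R ⟨r.1 + 1, hr⟩ * kPsi R r * kPsi R ⟨r.1 + 1, hr⟩ - 1) * kE R i)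
  | braidL (r : Fin (n - 1)) (hr : r.1 + 1 < n - 1) (i : Fin n → ZMod e)
      (h0 : i (pM r hr) = i (pL r)) (h1 : i (pL r) = i (pR r) + 1)
      (h2 : i (pR r) ≠ i (pL r) + 1) :
      KLRRel R n e ℓ κ (kPsi R r * kPsi R ⟨r.1 + 1, hr⟩ * kPsi R r * kE R i)
        ((kPsi R ⟨r.1 + 1, hr⟩ * kPsi R r * kPsi R ⟨r.1 + 1, hr⟩ + 1) * kE R i)
  | braidBoth (r : Fin (n - 1)) (hr : r.1 + 1 < n - 1) (i : Fin n → ZMod e)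
      (h0 : i (pM r hr) = i (pL r)) (h1 : i (pR r) = i (pL r) + 1)
      (h2 : i (pL r) = i (pR r) + 1) :
      KLRRel R n e ℓ κ (kPsi R r * kPsi R ⟨r.1 + 1, hr⟩ * kPsi R r * kE R i)
        ((kPsi R ⟨r.1 + 1, hr⟩ * kPsi R r * kPsi R ⟨r.1 + 1, hr⟩ +
            kY R (pL r) - 2 * kY R (pR r) + kY R (pM r hr)) * kE R i)
  | braidNone (r : Fin (n - 1)) (hr : r.1 + 1 < n - 1) (i : Fin n → ZMod e)
      (h : ¬(i (pM r hr) = i (pL r) ∧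
        (i (pR r) = i (pL r) + 1 ∨ i (pL r) = i (pR r) + 1))) :
      KLRRel R n e ℓ κ (kPsi R r * kPsi R ⟨r.1 + 1, hr⟩ * kPsi R r * kE R i)
        (kPsi R ⟨r.1 + 1, hr⟩ * kPsi R r * kPsi R ⟨r.1 + 1, hr⟩ * kE R i)

/-- The cyclotomic quiver Hecke algebra `R_n^Λ(R)`, `Λ = Σ_l Λ_{κ_l mod e}`. -/
noncomputable abbrev KLR (R : Type*) [CommRing R] (n e ℓ : ℕ) [NeZero e] (κ : ℕ → ℤ) :
    Type _ :=
  RingQuot (KLRRel R n e ℓ κ)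

/-- The generator `e(i)` of the cyclotomic quiver Hecke algebra. -/
noncomputable def KeGen (R : Type*) [CommRing R] (n e ℓ : ℕ) [NeZero e] (κ : ℕ → ℤ)
    (i : Fin n → ZMod e) : KLR R n e ℓ κ :=
  RingQuot.mkAlgHom R (KLRRel R n e ℓ κ) (kE R i)

/-- The generator `ψ_r` of the cyclotomic quiver Hecke algebra. -/
noncomputable def KpsiGen (R : Type*) [CommRing R] (n e ℓ : ℕ) [NeZero e] (κ : ℕ → ℤ)
    (r : Fin (n - 1)) : KLR R n e ℓ κ :=
  RingQuot.mkAlgHom R (KLRRel R n e ℓ κ) (kPsi R r)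

/-- The generator `y_k` of the cyclotomic quiver Hecke algebra. -/
noncomputable def KyGen (R : Type*) [CommRing R] (n e ℓ : ℕ) [NeZero e] (κ : ℕ → ℤ)
    (k : Fin n) : KLR R n e ℓ κ :=
  RingQuot.mkAlgHom R (KLRRel R n e ℓ κ) (kY R k)

end Paper
/-! ## The deformed cyclotomic quiver Hecke algebra -/

namespace Paper

/-- `y_k^⟨d⟩ = t^d y_k + [d]_t` in the free algebra. -/
def ydot (R : Type*) [CommRing R] (t : Rˣ) {n e : ℕ} (d : ℤ) (k : Fin n) :
    FreeAlgebra R (KLRGen n e) :=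
  algebraMap R _ ((t ^ d : Rˣ) : R) * kY R k + algebraMap R _ (qintU t d)

/-- `ρ_r(i) = î_r - î_{r+1}` for `i ∈ I^n`. -/
def rhoI {n e : ℕ} (i : Fin n → ZMod e) (r : Fin (n - 1)) : ℤ :=
  ((i (pL r)).val : ℤ) - ((i (pR r)).val : ℤ)

/-- The defining relations of the deformed cyclotomic quiver Hecke algebra `R_n(O)`. -/
inductive DefKLRRel (R : Type*) [CommRing R] (t : Rˣ) (n e ℓ : ℕ) [NeZero e] (κ : ℕ → ℤ) :
    FreeAlgebra R (KLRGen n e) → FreeAlgebra R (KLRGen n e) → Prop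
  | cyc (h : 0 < n) (i : Fin n → ZMod e) :
      DefKLRRel R t n e ℓ κ
        ((((List.range ℓ).map fun l =>
            if ((κ l : ZMod e) = i ⟨0, h⟩) then
              kY R (⟨0, h⟩ : Fin n) -
                algebraMap R _ (qintU t (κ l - ((i ⟨0, h⟩).val : ℤ)))
            else 1).prod) * kE R i) 0
  | orth (i j : Fin n → ZMod e) (h : i ≠ j) : DefKLRRel R t n e ℓ κ (kE R i * kE R j) 0
  | idem (i : Fin n → ZMod e) : DefKLRRel R t n e ℓ κ (kE R i * kE R i) (kE R i)
  | complete : DefKLRRel R t n e ℓ κ (∑ i : Fin n → ZMod e, kE R i) 1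
  | yE (k : Fin n) (i : Fin n → ZMod e) :
      DefKLRRel R t n e ℓ κ (kY R k * kE R i) (kE R i * kY R k)
  | psiE (r : Fin (n - 1)) (i : Fin n → ZMod e) :
      DefKLRRel R t n e ℓ κ (kPsi R r * kE R i) (kE R (swapSeq i r) * kPsi R r)
  | yy (k m : Fin n) : DefKLRRel R t n e ℓ κ (kY R k * kY R m) (kY R m * kY R k)
  | psiyEq (r : Fin (n - 1)) (i : Fin n → ZMod e) (h : i (pL r) = i (pR r)) :
      DefKLRRel R t n e ℓ κ (kPsi R r * kY R (pR r) * kE R i)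
        ((kY R (pL r) * kPsi R r + 1) * kE R i)
  | psiyNe (r : Fin (n - 1)) (i : Fin n → ZMod e) (h : i (pL r) ≠ i (pR r)) :
      DefKLRRel R t n e ℓ κ (kPsi R r * kY R (pR r) * kE R i)
        (kY R (pL r) * kPsi R r * kE R i)
  | ypsiEq (r : Fin (n - 1)) (i : Fin n → ZMod e) (h : i (pL r) = i (pR r)) :
      DefKLRRel R t n e ℓ κ (kY R (pR r) * kPsi R r * kE R i)
        ((kPsi R r * kY R (pL r) + 1) * kE R i)
  | ypsiNe (r : Fin (n - 1)) (i : Fin n → ZMod e) (h : i (pL r) ≠ i (pR r)) :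
      DefKLRRel R t n e ℓ κ (kY R (pR r) * kPsi R r * kE R i)
        (kPsi R r * kY R (pL r) * kE R i)
  | psiyFar (r : Fin (n - 1)) (k : Fin n) (h : k.1 ≠ r.1 ∧ k.1 ≠ r.1 + 1) :
      DefKLRRel R t n e ℓ κ (kPsi R r * kY R k) (kY R k * kPsi R r)
  | psipsiFar (r s : Fin (n - 1)) (h : r.1 + 1 < s.1 ∨ s.1 + 1 < r.1) :
      DefKLRRel R t n e ℓ κ (kPsi R r * kPsi R s) (kPsi R s * kPsi R r)
  | quadEq (r : Fin (n - 1)) (i : Fin n → ZMod e) (h : i (pL r) = i (pR r)) :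
      DefKLRRel R t n e ℓ κ (kPsi R r ^ 2 * kE R i) 0
  | quadR (r : Fin (n - 1)) (i : Fin n → ZMod e)
      (h1 : i (pR r) = i (pL r) + 1) (h2 : i (pL r) ≠ i (pR r) + 1) :
      DefKLRRel R t n e ℓ κ (kPsi R r ^ 2 * kE R i)
        ((ydot R t (1 + rhoI i r) (pL r) - kY R (pR r)) * kE R i)
  | quadL (r : Fin (n - 1)) (i : Fin n → ZMod e)
      (h1 : i (pL r) = i (pR r) + 1) (h2 : i (pR r) ≠ i (pL r) + 1) :
      DefKLRRel R t n e ℓ κ (kPsi R r ^ 2 * kE R i)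
        ((ydot R t (1 - rhoI i r) (pR r) - kY R (pL r)) * kE R i)
  | quadBoth (r : Fin (n - 1)) (i : Fin n → ZMod e)
      (h1 : i (pR r) = i (pL r) + 1) (h2 : i (pL r) = i (pR r) + 1) :
      DefKLRRel R t n e ℓ κ (kPsi R r ^ 2 * kE R i)
        ((ydot R t (1 + rhoI i r) (pL r) - kY R (pR r)) *
          (ydot R t (1 - rhoI i r) (pR r) - kY R (pL r)) * kE R i)
  | quadNone (r : Fin (n - 1)) (i : Fin n → ZMod e) (h1 : i (pL r) ≠ i (pR r))
      (h2 : i (pR r) ≠ i (pL r) + 1) (h3 : i (pL r) ≠ i (pR r) + 1) :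
      DefKLRRel R t n e ℓ κ (kPsi R r ^ 2 * kE R i) (kE R i)
  | braidBoth (r : Fin (n - 1)) (hr : r.1 + 1 < n - 1) (i : Fin n → ZMod e)
      (h0 : i (pM r hr) = i (pL r)) (h1 : i (pR r) = i (pL r) + 1)
      (h2 : i (pL r) = i (pR r) + 1) :
      DefKLRRel R t n e ℓ κ
        ((kPsi R r * kPsi R ⟨r.1 + 1, hr⟩ * kPsi R r -
            kPsi R ⟨r.1 + 1, hr⟩ * kPsi R r * kPsi R ⟨r.1 + 1, hr⟩) * kE R i)
        ((ydot R t (1 + rhoI i r) (pL r) + ydot R t (1 + rhoI i r) (pM r hr) -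
            ydot R t (1 + rhoI i r) (pR r) - ydot R t (1 - rhoI i r) (pR r)) * kE R i)
  | braidR (r : Fin (n - 1)) (hr : r.1 + 1 < n - 1) (i : Fin n → ZMod e)
      (h0 : i (pM r hr) = i (pL r)) (h1 : i (pR r) = i (pL r) + 1)
      (h2 : i (pL r) ≠ i (pR r) + 1) :
      DefKLRRel R t n e ℓ κ
        ((kPsi R r * kPsi R ⟨r.1 + 1, hr⟩ * kPsi R r -
            kPsi R ⟨r.1 + 1, hr⟩ * kPsi R r * kPsi R ⟨r.1 + 1, hr⟩) * kE R i)
        (algebraMap R _ (-(((t ^ (1 + rhoI i r) : Rˣ) : R))) * kE R i)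
  | braidL (r : Fin (n - 1)) (hr : r.1 + 1 < n - 1) (i : Fin n → ZMod e)
      (h0 : i (pM r hr) = i (pL r)) (h1 : i (pL r) = i (pR r) + 1)
      (h2 : i (pR r) ≠ i (pL r) + 1) :
      DefKLRRel R t n e ℓ κ
        ((kPsi R r * kPsi R ⟨r.1 + 1, hr⟩ * kPsi R r -
            kPsi R ⟨r.1 + 1, hr⟩ * kPsi R r * kPsi R ⟨r.1 + 1, hr⟩) * kE R i)
        (kE R i)
  | braidNone (r : Fin (n - 1)) (hr : r.1 + 1 < n - 1) (i : Fin n → ZMod e)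
      (h : ¬(i (pM r hr) = i (pL r) ∧
        (i (pR r) = i (pL r) + 1 ∨ i (pL r) = i (pR r) + 1))) :
      DefKLRRel R t n e ℓ κ
        ((kPsi R r * kPsi R ⟨r.1 + 1, hr⟩ * kPsi R r -
            kPsi R ⟨r.1 + 1, hr⟩ * kPsi R r * kPsi R ⟨r.1 + 1, hr⟩) * kE R i) 0

/-- The deformed cyclotomic quiver Hecke algebra `R_n(R)`. -/
noncomputable abbrev DefKLR (R : Type*) [CommRing R] (t : Rˣ) (n e ℓ : ℕ) [NeZero e]
    (κ : ℕ → ℤ) : Type _ :=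
  RingQuot (DefKLRRel R t n e ℓ κ)

/-- The generator `f_i` of the deformed cyclotomic quiver Hecke algebra. -/
noncomputable def DfGen (R : Type*) [CommRing R] (t : Rˣ) (n e ℓ : ℕ) [NeZero e]
    (κ : ℕ → ℤ) (i : Fin n → ZMod e) : DefKLR R t n e ℓ κ :=
  RingQuot.mkAlgHom R (DefKLRRel R t n e ℓ κ) (kE R i)

/-- The generator `ψ_r` of the deformed cyclotomic quiver Hecke algebra. -/
noncomputable def DpsiGen (R : Type*) [CommRing R] (t : Rˣ) (n e ℓ : ℕ) [NeZero e]
    (κ : ℕ → ℤ) (r : Fin (n - 1)) : DefKLR R t n e ℓ κ :=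
  RingQuot.mkAlgHom R (DefKLRRel R t n e ℓ κ) (kPsi R r)

/-- The generator `y_k` of the deformed cyclotomic quiver Hecke algebra. -/
noncomputable def DyGen (R : Type*) [CommRing R] (t : Rˣ) (n e ℓ : ℕ) [NeZero e]
    (κ : ℕ → ℤ) (k : Fin n) : DefKLR R t n e ℓ κ :=
  RingQuot.mkAlgHom R (DefKLRRel R t n e ℓ κ) (kY R k)

/-! ## Seminormal idempotents -/

/-- The seminormal idempotent `F_T` of the semisimple cyclotomic Hecke algebra:
`F_T = ∏_{k=1}^n ∏_{c ∈ Cont(n), [c_k(T)] ≠ [c]} (L_k - [c]) / ([c_k(T)] - [c])`. -/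
noncomputable def Fidem (K : Type*) [Field K] (tK : Kˣ) (n ℓ : ℕ) (κ : ℕ → ℤ)
    (T : StdTableau ℓ n) : CycHecke K tK n ℓ κ :=
  ((List.finRange n).map (fun k =>
    (((contFinset ℓ n κ).sort (· ≤ ·)).map (fun c =>
      if qint (tK : K) (content κ T (k.1 + 1)) ≠ qint (tK : K) c then
        (Lgen K tK n ℓ κ k - algebraMap K _ (qint (tK : K) c)) *
          algebraMap K _ ((qint (tK : K) (content κ T (k.1 + 1)) - qint (tK : K) c)⁻¹)
      else 1)).prod)).prod

/-- The residue idempotent `f_i = Σ_{T ∈ Std(i)} F_T`. -/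
noncomputable def fres (K : Type*) [Field K] (tK : Kˣ) (n ℓ e : ℕ) (κ : ℕ → ℤ)
    (i : Fin n → ZMod e) : CycHecke K tK n ℓ κ :=
  ∑ᶠ T : {T : StdTableau ℓ n // resSeq e κ T = i}, Fidem K tK n ℓ κ T.1

/-- The simultaneous two-sided eigenspace `H_{S,T}` of the Jucys–Murphy elements. -/
noncomputable def eigSub (K : Type*) [Field K] (tK : Kˣ) (n ℓ : ℕ) (κ : ℕ → ℤ)
    (S T : StdTableau ℓ n) : Submodule K (CycHecke K tK n ℓ κ) where
  carrier := {h | ∀ k : Fin n,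
      Lgen K tK n ℓ κ k * h = qint (tK : K) (content κ S (k.1 + 1)) • h ∧
      h * Lgen K tK n ℓ κ k = qint (tK : K) (content κ T (k.1 + 1)) • h}
  add_mem' := by
    intro a b ha hb
    intro k
    obtain ⟨h1, h2⟩ := ha k
    obtain ⟨h3, h4⟩ := hb k
    exact ⟨by rw [mul_add, h1, h3, smul_add], by rw [add_mul, h2, h4, smul_add]⟩
  zero_mem' := by intro k; simp
  smul_mem' := by
    intro c a ha
    intro k
    obtain ⟨h1, h2⟩ := ha k
    constructor
    · rw [mul_smul_comm, h1, smul_comm]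
    · rw [smul_mul_assoc, h2, smul_comm]

end Paper

namespace Paper

section LinExtSec

/-- Linear extensions of a relation on a finite set of nodes. -/
abbrev LinExt {P : Type} (R : P → P → Prop) (n : ℕ) : Type :=
  {f : P ≃ Fin n // ∀ A B, R A B → f A < f B}

variable {P : Type} {R : P → P → Prop} {n : ℕ}

namespace LinExt

/-- The node at position `k`. -/
def nd (x : LinExt R n) (k : Fin n) : P := x.1.symm k

/-- Interchange two entries, if the result is again a linear extension. -/
noncomputable def sw (i j : Fin n) (x : LinExt R n) : Option (LinExt R n) :=
  if h : ∀ A B, R A B → (x.1.trans (Equiv.swap i j)) A < (x.1.trans (Equiv.swap i j)) B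
  then some ⟨x.1.trans (Equiv.swap i j), h⟩ else none

theorem sw_eq_some {i j : Fin n} {x y : LinExt R n} :
    sw i j x = some y ↔ y.1 = x.1.trans (Equiv.swap i j) := by
  unfold sw
  split_ifs with h
  · simp only [Option.some.injEq]
    constructor
    · rintro rfl; rfl
    · intro h'; exact Subtype.ext h'.symm
  · simp only [reduceCtorEq, false_iff]
    intro h'
    exact h (h' ▸ y.2)

theorem sw_eq_none {i j : Fin n} {x : LinExt R n} :
    sw i j x = none ↔ ∃ A B, R A B ∧ Equiv.swap i j (x.1 B) ≤ Equiv.swap i j (x.1 A) := by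
  unfold sw
  split_ifs with h
  · simp only [reduceCtorEq, false_iff]
    rintro ⟨A, B, hAB, hle⟩
    exact absurd (h A B hAB) (not_lt.mpr hle)
  · simp only [true_iff]
    push Not at h
    exact h

theorem sw_symm {i j : Fin n} {x y : LinExt R n} (h : sw i j x = some y) :
    sw i j y = some x := by
  rw [sw_eq_some] at *
  rw [h]; ext A; simp

theorem nd_sw {i j : Fin n} {x y : LinExt R n} (h : sw i j x = some y) (k : Fin n) :
    nd y k = nd x (Equiv.swap i j k) := by
  rw [sw_eq_some] at h
  simp [nd, h]

theorem nd_sw_left {i j : Fin n} {x y : LinExt R n} (h : sw i j x = some y) :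
    nd y i = nd x j := by rw [nd_sw h]; simp

theorem nd_sw_right {i j : Fin n} {x y : LinExt R n} (h : sw i j x = some y) :
    nd y j = nd x i := by rw [nd_sw h]; simp

theorem nd_sw_other {i j : Fin n} {x y : LinExt R n} (h : sw i j x = some y) {k : Fin n}
    (h1 : k ≠ i) (h2 : k ≠ j) : nd y k = nd x k := by
  rw [nd_sw h, Equiv.swap_apply_of_ne_of_ne h1 h2]

theorem hexagon {i j k : Fin n} (hj : j.1 = i.1 + 1) (hk : k.1 = j.1 + 1) (x : LinExt R n) :
    (((sw i j x).bind (sw j k)).bind (sw i j)) =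
      (((sw j k x).bind (sw i j)).bind (sw j k)) := by
  have hij : i ≠ j := by intro h; rw [h] at hj; omega
  have hjk : j ≠ k := by intro h; rw [h] at hk; omega
  have hik : i ≠ k := by intro h; rw [h] at hj; omega
  have hb : Equiv.swap i j * Equiv.swap j k * Equiv.swap i j =
      Equiv.swap j k * Equiv.swap i j * Equiv.swap j k := by
    ext a
    simp only [Equiv.Perm.mul_apply, Equiv.swap_apply_def]
    grind
  have key : ∀ y : LinExt R n, (((sw i j x).bind (sw j k)).bind (sw i j)) = some y ↔
      ∀ A, y.1 A = (Equiv.swap i j * Equiv.swap j k * Equiv.swap i j) (x.1 A) := by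
    intro y
    constructor
    · intro h
      simp only [Option.bind_eq_some_iff] at h
      obtain ⟨z, ⟨w, h1, h2⟩, h3⟩ := h
      rw [sw_eq_some] at h1 h2 h3
      intro A; simp [h1, h2, h3]
    · intro h
      have s1 : ∀ A B, R A B → (x.1.trans (Equiv.swap i j)) A < (x.1.trans (Equiv.swap i j)) B := by
        intro A B hAB
        have h1 := x.2 A B hAB
        have h2 := y.2 A B hAB
        rw [h, h] at h2
        simp only [Equiv.Perm.mul_apply, Equiv.swap_apply_def, Equiv.trans_apply] at h2 ⊢
        grind
      have s2 : ∀ A B, R A B → ((x.1.trans (Equiv.swap i j)).trans (Equiv.swap j k)) A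
          < ((x.1.trans (Equiv.swap i j)).trans (Equiv.swap j k)) B := by
        intro A B hAB
        have h1 := x.2 A B hAB
        have h2 := y.2 A B hAB
        rw [h, h] at h2
        simp only [Equiv.Perm.mul_apply, Equiv.swap_apply_def, Equiv.trans_apply] at h2 ⊢
        grind
      have e1 : sw i j x = some ⟨_, s1⟩ := sw_eq_some.mpr rfl
      have e2 : sw j k (⟨_, s1⟩ : LinExt R n) = some ⟨_, s2⟩ := sw_eq_some.mpr rfl
      rw [e1, Option.bind_some, e2, Option.bind_some, sw_eq_some]
      ext A; rw [h]; simp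
  have key2 : ∀ y : LinExt R n, (((sw j k x).bind (sw i j)).bind (sw j k)) = some y ↔
      ∀ A, y.1 A = (Equiv.swap i j * Equiv.swap j k * Equiv.swap i j) (x.1 A) := by
    rw [hb]
    intro y
    constructor
    · intro h
      simp only [Option.bind_eq_some_iff] at h
      obtain ⟨z, ⟨w, h1, h2⟩, h3⟩ := h
      rw [sw_eq_some] at h1 h2 h3
      intro A; simp [h1, h2, h3]
    · intro h
      have s1 : ∀ A B, R A B → (x.1.trans (Equiv.swap j k)) A < (x.1.trans (Equiv.swap j k)) B := by
        intro A B hAB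
        have h1 := x.2 A B hAB
        have h2 := y.2 A B hAB
        rw [h, h] at h2
        simp only [Equiv.Perm.mul_apply, Equiv.swap_apply_def, Equiv.trans_apply] at h2 ⊢
        grind
      have s2 : ∀ A B, R A B → ((x.1.trans (Equiv.swap j k)).trans (Equiv.swap i j)) A
          < ((x.1.trans (Equiv.swap j k)).trans (Equiv.swap i j)) B := by
        intro A B hAB
        have h1 := x.2 A B hAB
        have h2 := y.2 A B hAB
        rw [h, h] at h2
        simp only [Equiv.Perm.mul_apply, Equiv.swap_apply_def, Equiv.trans_apply] at h2 ⊢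
        grind
      have e1 : sw j k x = some ⟨_, s1⟩ := sw_eq_some.mpr rfl
      have e2 : sw i j (⟨_, s1⟩ : LinExt R n) = some ⟨_, s2⟩ := sw_eq_some.mpr rfl
      rw [e1, Option.bind_some, e2, Option.bind_some, sw_eq_some]
      ext A; rw [h]; simp
  ext y
  exact (key y).trans (key2 y).symm

theorem sw_comm {i j k l : Fin n} (hj : j.1 = i.1 + 1) (hl : l.1 = k.1 + 1)
    (hjk : j < k) (x : LinExt R n) :
    (sw i j x).bind (sw k l) = (sw k l x).bind (sw i j) := by
  have key : ∀ y : LinExt R n, (sw i j x).bind (sw k l) = some y ↔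
      ∀ A, y.1 A = Equiv.swap k l (Equiv.swap i j (x.1 A)) := by
    intro y
    constructor
    · intro h
      simp only [Option.bind_eq_some_iff] at h
      obtain ⟨z, h1, h2⟩ := h
      rw [sw_eq_some] at h1 h2
      intro A; simp [h1, h2]
    · intro h
      have s1 : ∀ A B, R A B → (x.1.trans (Equiv.swap i j)) A < (x.1.trans (Equiv.swap i j)) B := by
        intro A B hAB
        have h1 := x.2 A B hAB
        have h2 := y.2 A B hAB
        rw [h, h] at h2
        simp only [Equiv.swap_apply_def, Equiv.trans_apply] at h2 ⊢
        grind
      have e1 : sw i j x = some ⟨_, s1⟩ := sw_eq_some.mpr rfl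
      rw [e1, Option.bind_some, sw_eq_some]
      ext A; rw [h]; simp
  have key2 : ∀ y : LinExt R n, (sw k l x).bind (sw i j) = some y ↔
      ∀ A, y.1 A = Equiv.swap k l (Equiv.swap i j (x.1 A)) := by
    intro y
    have hb : ∀ a, Equiv.swap k l (Equiv.swap i j a) = Equiv.swap i j (Equiv.swap k l a) := by
      intro a
      simp only [Equiv.swap_apply_def]
      grind
    simp only [hb]
    constructor
    · intro h
      simp only [Option.bind_eq_some_iff] at h
      obtain ⟨z, h1, h2⟩ := h
      rw [sw_eq_some] at h1 h2
      intro A; simp [h1, h2]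
    · intro h
      have s1 : ∀ A B, R A B → (x.1.trans (Equiv.swap k l)) A < (x.1.trans (Equiv.swap k l)) B := by
        intro A B hAB
        have h1 := x.2 A B hAB
        have h2 := y.2 A B hAB
        rw [h, h] at h2
        simp only [Equiv.swap_apply_def, Equiv.trans_apply] at h2 ⊢
        grind
      have e1 : sw k l x = some ⟨_, s1⟩ := sw_eq_some.mpr rfl
      rw [e1, Option.bind_some, sw_eq_some]
      ext A; rw [h]; simp
  ext y
  exact (key y).trans (key2 y).symm

end LinExt

end LinExtSec

end Paper

namespace Paper

section ClosureSec

variable {A : Type*} [Ring A]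

/-- The ring generated by `W` and the first `m` of the `T`'s. -/
def genRing (W : Subring A) (T : ℕ → A) (m : ℕ) : Subring A :=
  Subring.closure ((W : Set A) ∪ {a | ∃ j, j < m ∧ a = T j})

theorem genRing_W (W : Subring A) (T : ℕ → A) (m : ℕ) {a : A} (h : a ∈ W) :
    a ∈ genRing W T m := Subring.subset_closure (Or.inl h)

theorem genRing_T (W : Subring A) (T : ℕ → A) {m j : ℕ} (h : j < m) :
    T j ∈ genRing W T m := Subring.subset_closure (Or.inr ⟨j, h, rfl⟩)

theorem genRing_mono (W : Subring A) (T : ℕ → A) {m m' : ℕ} (h : m ≤ m') :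
    genRing W T m ≤ genRing W T m' := by
  apply Subring.closure_mono
  rintro a (ha | ⟨j, hj, rfl⟩)
  · exact Or.inl ha
  · exact Or.inr ⟨j, by omega, rfl⟩

theorem genRing_zero (W : Subring A) (T : ℕ → A) : genRing W T 0 = W := by
  unfold genRing
  have : ((W : Set A) ∪ {a | ∃ j, j < 0 ∧ a = T j}) = W := by ext a; simp
  rw [this, Subring.closure_eq]

/-- The additive group `B + B t B`. -/
def dbl (B : Subring A) (t : A) : AddSubgroup A :=
  AddSubgroup.closure ((B : Set A) ∪ {z | ∃ a ∈ B, ∃ b ∈ B, z = a * t * b})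

theorem comm_left (W : Subring A) (T : ℕ → A) (N m : ℕ) (hm : m + 1 < N)
    (hW : ∀ j < N, ∀ a ∈ W, ∃ a' ∈ W, ∃ a'' ∈ W, T j * a = a' * T j + a'')
    (hfar : ∀ j k, j + 1 < k → k < N → T j * T k = T k * T j)
    {a : A} (ha : a ∈ genRing W T m) :
    ∃ a' ∈ genRing W T m, ∃ a'' ∈ genRing W T m, T (m + 1) * a = a' * T (m + 1) + a'' := by
  induction ha using Subring.closure_induction with
  | mem x hx =>
    rcases hx with hx | ⟨j, hj, rfl⟩
    · obtain ⟨a', h', a'', h'', e⟩ := hW (m + 1) hm x hx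
      exact ⟨a', genRing_W _ _ _ h', a'', genRing_W _ _ _ h'', e⟩
    · refine ⟨T j, genRing_T _ _ hj, 0, zero_mem _, ?_⟩
      rw [hfar j (m + 1) (by omega) hm, add_zero]
  | zero => exact ⟨0, zero_mem _, 0, zero_mem _, by simp⟩
  | one => exact ⟨1, one_mem _, 0, zero_mem _, by simp⟩
  | add x y hx hy ihx ihy =>
    obtain ⟨a, h, b, h', e⟩ := ihx
    obtain ⟨c, k, d, k', e'⟩ := ihy
    exact ⟨a + c, add_mem h k, b + d, add_mem h' k', by rw [mul_add, e, e', add_mul]; abel⟩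
  | neg x hx ihx =>
    obtain ⟨a, h, b, h', e⟩ := ihx
    exact ⟨-a, neg_mem h, -b, neg_mem h', by rw [mul_neg, e, neg_mul]; abel⟩
  | mul x y hx hy ihx ihy =>
    obtain ⟨a, h, b, h', e⟩ := ihx
    obtain ⟨c, k, d, k', e'⟩ := ihy
    refine ⟨a * c, mul_mem h k, a * d + b * y, add_mem (mul_mem h k') (mul_mem h' hy), ?_⟩
    rw [← mul_assoc, e, add_mul, mul_assoc a, e', mul_add, mul_assoc, add_assoc]

theorem comm_right (W : Subring A) (T : ℕ → A) (N m : ℕ) (hm : m + 1 < N)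
    (hW : ∀ j < N, ∀ a ∈ W, ∃ a' ∈ W, ∃ a'' ∈ W, a * T j = T j * a' + a'')
    (hfar : ∀ j k, j + 1 < k → k < N → T j * T k = T k * T j)
    {a : A} (ha : a ∈ genRing W T m) :
    ∃ a' ∈ genRing W T m, ∃ a'' ∈ genRing W T m, a * T (m + 1) = T (m + 1) * a' + a'' := by
  induction ha using Subring.closure_induction with
  | mem x hx =>
    rcases hx with hx | ⟨j, hj, rfl⟩
    · obtain ⟨a', h', a'', h'', e⟩ := hW (m + 1) hm x hx
      exact ⟨a', genRing_W _ _ _ h', a'', genRing_W _ _ _ h'', e⟩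
    · refine ⟨T j, genRing_T _ _ hj, 0, zero_mem _, ?_⟩
      rw [hfar j (m + 1) (by omega) hm, add_zero]
  | zero => exact ⟨0, zero_mem _, 0, zero_mem _, by simp⟩
  | one => exact ⟨1, one_mem _, 0, zero_mem _, by simp⟩
  | add x y hx hy ihx ihy =>
    obtain ⟨a, h, b, h', e⟩ := ihx
    obtain ⟨c, k, d, k', e'⟩ := ihy
    exact ⟨a + c, add_mem h k, b + d, add_mem h' k', by rw [add_mul, e, e', mul_add]; abel⟩
  | neg x hx ihx =>
    obtain ⟨a, h, b, h', e⟩ := ihx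
    exact ⟨-a, neg_mem h, -b, neg_mem h', by rw [neg_mul, e, mul_neg]; abel⟩
  | mul x y hx hy ihx ihy =>
    obtain ⟨a, h, b, h', e⟩ := ihx
    obtain ⟨c, k, d, k', e'⟩ := ihy
    refine ⟨a * c, mul_mem h k, b * c + x * d, add_mem (mul_mem h' k) (mul_mem hx k'), ?_⟩
    rw [mul_assoc, e', mul_add, ← mul_assoc, e, add_mul, mul_assoc, add_assoc]

theorem dbl_base {B : Subring A} {t a : A} (h : a ∈ B) : a ∈ dbl B t :=
  AddSubgroup.subset_closure (Or.inl h)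

theorem dbl_mid {B : Subring A} {t a b : A} (h : a ∈ B) (h' : b ∈ B) : a * t * b ∈ dbl B t :=
  AddSubgroup.subset_closure (Or.inr ⟨a, h, b, h', rfl⟩)

theorem dbl_mul_right {B : Subring A} {t z c : A} (h : z ∈ dbl B t) (hc : c ∈ B) :
    z * c ∈ dbl B t := by
  induction h using AddSubgroup.closure_induction with
  | mem x hx =>
    rcases hx with hx | ⟨a, ha, b, hb, rfl⟩
    · exact dbl_base (mul_mem hx hc)
    · rw [mul_assoc]; exact dbl_mid ha (mul_mem hb hc)
  | zero => rw [zero_mul]; exact zero_mem _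
  | add x y hx hy ihx ihy => rw [add_mul]; exact add_mem ihx ihy
  | neg x hx ihx => rw [neg_mul]; exact neg_mem ihx

theorem dbl_mul_left {B : Subring A} {t z c : A} (h : z ∈ dbl B t) (hc : c ∈ B) :
    c * z ∈ dbl B t := by
  induction h using AddSubgroup.closure_induction with
  | mem x hx =>
    rcases hx with hx | ⟨a, ha, b, hb, rfl⟩
    · exact dbl_base (mul_mem hc hx)
    · rw [← mul_assoc, ← mul_assoc]; exact dbl_mid (mul_mem hc ha) hb
  | zero => rw [mul_zero]; exact zero_mem _
  | add x y hx hy ihx ihy => rw [mul_add]; exact add_mem ihx ihy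
  | neg x hx ihx => rw [mul_neg]; exact neg_mem ihx

/-- The key closure: if `t b t ∈ B + B t B` for all `b ∈ B` then this is closed under `t`. -/
theorem dbl_mul_t {B : Subring A} {t z : A} (h : z ∈ dbl B t)
    (ht : ∀ b ∈ B, t * b * t ∈ dbl B t) : z * t ∈ dbl B t := by
  induction h using AddSubgroup.closure_induction with
  | mem x hx =>
    rcases hx with hx | ⟨a, ha, b, hb, rfl⟩
    · have := dbl_mid (t := t) hx (one_mem B); rwa [mul_one] at this
    · have := dbl_mul_left (ht b hb) ha
      rwa [← mul_assoc, ← mul_assoc] at this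
  | zero => rw [zero_mul]; exact zero_mem _
  | add x y hx hy ihx ihy => rw [add_mul]; exact add_mem ihx ihy
  | neg x hx ihx => rw [neg_mul]; exact neg_mem ihx

theorem le_dbl_of (W : Subring A) (T : ℕ → A) (m : ℕ)
    (ht : ∀ b ∈ genRing W T m, T m * b * T m ∈ dbl (genRing W T m) (T m)) :
    ∀ a ∈ genRing W T (m + 1), a ∈ dbl (genRing W T m) (T m) := by
  intro a ha
  suffices ∀ z ∈ dbl (genRing W T m) (T m), z * a ∈ dbl (genRing W T m) (T m) by
    simpa using this 1 (dbl_base (one_mem _))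
  induction ha using Subring.closure_induction with
  | mem x hx =>
    intro z hz
    rcases hx with hx | ⟨j, hj, rfl⟩
    · exact dbl_mul_right hz (genRing_W _ _ _ hx)
    · by_cases h : j < m
      · exact dbl_mul_right hz (genRing_T _ _ h)
      · have : j = m := by omega
        subst this
        exact dbl_mul_t hz ht
  | zero => intro z hz; rw [mul_zero]; exact zero_mem _
  | one => intro z hz; rwa [mul_one]
  | add x y hx hy ihx ihy => intro z hz; rw [mul_add]; exact add_mem (ihx z hz) (ihy z hz)
  | neg x hx ihx => intro z hz; rw [mul_neg]; exact neg_mem (ihx z hz)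
  | mul x y hx hy ihx ihy => intro z hz; rw [← mul_assoc]; exact ihy _ (ihx z hz)

theorem genRing_succ_le (W : Subring A) (T : ℕ → A) (N : ℕ)
    (hW : ∀ j < N, ∀ a ∈ W, ∃ a' ∈ W, ∃ a'' ∈ W, T j * a = a' * T j + a'')
    (hW' : ∀ j < N, ∀ a ∈ W, ∃ a' ∈ W, ∃ a'' ∈ W, a * T j = T j * a' + a'')
    (hfar : ∀ j k, j + 1 < k → k < N → T j * T k = T k * T j)
    (hbr : ∀ j, j + 1 < N → T j * T (j + 1) * T j = T (j + 1) * T j * T (j + 1))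
    (hq : ∀ j < N, ∃ a ∈ W, ∃ b ∈ W, T j * T j = a * T j + b) :
    ∀ m, m < N → ∀ a ∈ genRing W T (m + 1), a ∈ dbl (genRing W T m) (T m) := by
  intro m
  induction m with
  | zero =>
    intro h0
    apply le_dbl_of
    intro b hb
    rw [genRing_zero] at hb ⊢
    obtain ⟨a', h', a'', h'', e⟩ := hW 0 h0 b hb
    obtain ⟨c, hc, d, hd, e2⟩ := hq 0 h0
    have : T 0 * b * T 0 = (a' * c + a'') * T 0 * 1 + a' * d := by
      rw [e, add_mul, mul_assoc, e2, mul_one]; noncomm_ring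
    rw [this]
    exact add_mem (dbl_mid (add_mem (mul_mem h' hc) h'') (one_mem _)) (dbl_base (mul_mem h' hd))
  | succ m ih =>
    intro h0
    have ih := ih (by omega)
    apply le_dbl_of
    intro b hb
    replace hb := ih b hb
    clear ih
    have hle : genRing W T m ≤ genRing W T (m + 1) := genRing_mono _ _ (by omega)
    have hTm : T m ∈ genRing W T (m + 1) := genRing_T _ _ (by omega)
    obtain ⟨c, hc, d, hd, e2⟩ := hq (m + 1) h0
    have hWm : ∀ {a}, a ∈ W → a ∈ genRing W T (m + 1) := fun h => genRing_W _ _ _ h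
    induction hb using AddSubgroup.closure_induction with
    | mem x hx =>
      rcases hx with hx | ⟨a, ha, b, hb, rfl⟩
      · obtain ⟨a', h', a'', h'', e⟩ := comm_left W T N m h0 hW hfar hx
        have : T (m + 1) * x * T (m + 1) = (a' * c + a'') * T (m + 1) * 1 + a' * d := by
          rw [e, add_mul, mul_assoc, e2, mul_one]; noncomm_ring
        rw [this]
        exact add_mem (dbl_mid (add_mem (mul_mem (hle h') (hWm hc)) (hle h'')) (one_mem _))
          (dbl_base (mul_mem (hle h') (hWm hd)))
      · obtain ⟨a', h', a'', h'', e⟩ := comm_left W T N m h0 hW hfar ha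
        obtain ⟨b', k', b'', k'', f⟩ := comm_right W T N m h0 hW' hfar hb
        have : T (m + 1) * (a * T m * b) * T (m + 1) =
            (a' * T m) * T (m + 1) * (T m * b') + a' * T (m + 1) * (T m * b'') +
            (a'' * T m) * T (m + 1) * b' + a'' * T m * b'' := by
          have e1 : T (m + 1) * (a * T m * b) * T (m + 1) =
            (T (m + 1) * a) * T m * (b * T (m + 1)) := by noncomm_ring
          have e3 : a' * T m * T (m + 1) * (T m * b') =
            a' * (T m * T (m + 1) * T m) * b' := by noncomm_ring
          rw [e1, e, f, e3, hbr m h0]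
          noncomm_ring
        rw [this]
        refine add_mem (add_mem (add_mem ?_ ?_) ?_) ?_
        · exact dbl_mid (mul_mem (hle h') hTm) (mul_mem hTm (hle k'))
        · exact dbl_mid (hle h') (mul_mem hTm (hle k''))
        · exact dbl_mid (mul_mem (hle h'') hTm) (hle k')
        · exact dbl_base (mul_mem (mul_mem (hle h'') hTm) (hle k''))
    | zero => rw [mul_zero, zero_mul]; exact zero_mem _
    | add x y hx hy ihx ihy => rw [mul_add, add_mul]; exact add_mem ihx ihy
    | neg x hx ihx => rw [mul_neg, neg_mul]; exact neg_mem ihx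

end ClosureSec

section BddSec

variable {K : Type*} [Field K] {Γ : Type*} [LinearOrderedCommGroupWithZero Γ] (v : Valuation K Γ)
variable {X : Type*} [Fintype X]

/-- A set of operators has bounded denominators. -/
def OpBdd (S : Set (Module.End K (X → K))) : Prop :=
  ∃ d : K, d ≠ 0 ∧ ∀ a ∈ S, ∀ F : X → K, (∀ x, v (F x) ≤ 1) → ∀ x, v (d * a F x) ≤ 1

theorem OpBdd.dbl {B : Subring (Module.End K (X → K))} {t : Module.End K (X → K)}
    (hB : OpBdd v (B : Set (Module.End K (X → K)))) (ht : OpBdd v {t}) :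
    OpBdd v (dbl B t : Set (Module.End K (X → K))) := by
  obtain ⟨d, hd, h⟩ := hB
  obtain ⟨d', hd', h'⟩ := ht
  -- first enlarge so that the same scalar works
  have key : ∀ a ∈ B, ∀ b ∈ B, ∀ F : X → K, (∀ x, v (F x) ≤ 1) → ∀ x,
      v ((d * d' * d) * (a * t * b) F x) ≤ 1 := by
    intro a ha b hb F hF x
    have h1 : ∀ x, v ((d • b F) x) ≤ 1 := fun x => h b hb F hF x
    have h2 : ∀ x, v ((d' • t (d • b F)) x) ≤ 1 := fun x => h' t rfl _ h1 x
    have h3 := h a ha _ h2 x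
    have : d * a (d' • t (d • b F)) x = (d * d' * d) * (a * t * b) F x := by
      simp only [map_smul, Module.End.mul_apply, Pi.smul_apply, smul_eq_mul]; ring
    rwa [this] at h3
  obtain ⟨d1, hd1, hh1⟩ : ∃ d1 : K, d1 ≠ 0 ∧ v d1 ≤ 1 ∧ v (d1 * (d' * d)) ≤ 1 := by
    by_cases hc : v (d' * d) ≤ 1
    · exact ⟨1, one_ne_zero, by simp, by simpa using hc⟩
    · push Not at hc
      have : d' * d ≠ 0 := mul_ne_zero hd' hd
      refine ⟨(d' * d)⁻¹, inv_ne_zero this, ?_, ?_⟩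
      · rw [map_inv₀]; exact inv_le_one_of_one_le₀ hc.le
      · rw [inv_mul_cancel₀ this, map_one]
  refine ⟨d1 * (d * d' * d), by simp [hd, hd', hd1], ?_⟩
  by_cases hc : v (d' * d) ≤ 1
  all_goals
    intro a ha
    induction ha using AddSubgroup.closure_induction with
    | mem z hz =>
      intro F hF x
      rcases hz with hz | ⟨a, ha, b, hb, rfl⟩
      · have e : d1 * (d * d' * d) * z F x = (d1 * (d' * d)) * (d * z F x) := by ring
        rw [e, map_mul]
        exact mul_le_one' hh1.2 (h z hz F hF x)
      · rw [mul_assoc, map_mul]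
        exact mul_le_one' hh1.1 (key a ha b hb F hF x)
    | zero => intro F hF x; simp
    | add y z hy hz ihy ihz =>
      intro F hF x
      rw [LinearMap.add_apply, Pi.add_apply, mul_add]
      exact v.map_add_le (ihy F hF x) (ihz F hF x)
    | neg y hy ihy =>
      intro F hF x
      rw [LinearMap.neg_apply, Pi.neg_apply, mul_neg, Valuation.map_neg]
      exact ihy F hF x

theorem genRing_bdd (W : Subring (Module.End K (X → K))) (T : ℕ → Module.End K (X → K)) (N : ℕ)
    (hW : ∀ j < N, ∀ a ∈ W, ∃ a' ∈ W, ∃ a'' ∈ W, T j * a = a' * T j + a'')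
    (hW' : ∀ j < N, ∀ a ∈ W, ∃ a' ∈ W, ∃ a'' ∈ W, a * T j = T j * a' + a'')
    (hfar : ∀ j k, j + 1 < k → k < N → T j * T k = T k * T j)
    (hbr : ∀ j, j + 1 < N → T j * T (j + 1) * T j = T (j + 1) * T j * T (j + 1))
    (hq : ∀ j < N, ∃ a ∈ W, ∃ b ∈ W, T j * T j = a * T j + b)
    (hWb : OpBdd v (W : Set (Module.End K (X → K))))
    (hTb : ∀ j < N, OpBdd v {T j}) :
    ∀ m ≤ N, OpBdd v (genRing W T m : Set (Module.End K (X → K))) := by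
  intro m
  induction m with
  | zero => intro _; rw [genRing_zero]; exact hWb
  | succ m ih =>
    intro hm
    obtain ⟨d, hd, h⟩ := (ih (by omega)).dbl v (hTb m (by omega))
    exact ⟨d, hd, fun a ha => h a (genRing_succ_le W T N hW hW' hfar hbr hq m (by omega) a ha)⟩

theorem exists_common_denom {ι : Type*} (s : Finset ι) (z : ι → K) :
    ∃ d : K, d ≠ 0 ∧ ∀ i ∈ s, v (d * z i) ≤ 1 := by
  induction s using Finset.induction_on with
  | empty => exact ⟨1, one_ne_zero, by simp⟩
  | insert a s ha ih =>
    obtain ⟨d, hd, h⟩ := ih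
    by_cases hc : v (d * z a) ≤ 1
    · refine ⟨d, hd, ?_⟩
      intro i hi
      rcases Finset.mem_insert.mp hi with rfl | hi
      · exact hc
      · exact h i hi
    · push Not at hc
      have hz : d * z a ≠ 0 := by
        intro h0; rw [h0, map_zero] at hc; exact absurd hc (by simp)
      refine ⟨(d * z a)⁻¹ * d, mul_ne_zero (inv_ne_zero hz) hd, ?_⟩
      intro i hi
      rcases Finset.mem_insert.mp hi with rfl | hi
      · rw [mul_assoc, inv_mul_cancel₀ hz, map_one]
      · rw [mul_assoc, map_mul, map_inv₀]
        exact mul_le_one' (inv_le_one_of_one_le₀ hc.le) (h i hi)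

theorem le_one_of_bdd_pow [MulArchimedean Γ] {c d : K} (hd : d ≠ 0)
    (h : ∀ k : ℕ, v (d * c ^ k) ≤ 1) : v c ≤ 1 := by
  by_contra hc
  push Not at hc
  obtain ⟨k, hk⟩ := MulArchimedean.arch (v d)⁻¹ hc
  have h1 := h (k + 1)
  rw [map_mul, map_pow, pow_succ] at h1
  have hvd : 0 < v d := by rw [Valuation.pos_iff]; exact hd
  have h2 : 1 ≤ v d * v c ^ k := by
    calc (1 : Γ) = v d * (v d)⁻¹ := (mul_inv_cancel₀ hvd.ne').symm
      _ ≤ _ := by gcongr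
  have h3 : v c ≤ 1 := by
    calc v c = 1 * v c := (one_mul _).symm
      _ ≤ (v d * v c ^ k) * v c := by gcongr
      _ ≤ 1 := by rw [mul_assoc]; exact h1
  exact absurd h3 (not_le.mpr hc)

end BddSec
end Paper

namespace Paper

section OpSec

variable {K : Type*} [Field K]

/-- The numerator-type function. -/
noncomputable def sN (q u w : K) : K := (q * w - u) * (w - q * u) / (w - u) ^ 2

/-- The diagonal coefficient. -/
noncomputable def sal (q u w : K) : K := (q - 1) * w / (w - u)

theorem sN_symm (q u w : K) : sN q u w = sN q w u := by
  unfold sN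
  rw [show (u - w) ^ 2 = (w - u) ^ 2 by ring]
  congr 1; ring

theorem sal_quad (q : K) {u w : K} (h : u ≠ w) :
    sal q u w * sal q u w + sN q u w = (q - 1) * sal q u w + q := by
  have : w - u ≠ 0 := sub_ne_zero.mpr h.symm
  unfold sal sN; field_simp; ring

theorem sal_add (q : K) {u w : K} (h : u ≠ w) : sal q u w + sal q w u = q - 1 := by
  have h1 : w - u ≠ 0 := sub_ne_zero.mpr h.symm
  have h2 : u - w ≠ 0 := sub_ne_zero.mpr h
  unfold sal
  rw [show u - w = -(w - u) by ring, div_neg]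
  field_simp; ring

theorem sal_tri (q : K) {a b c : K} (hab : a ≠ b) (hac : a ≠ c) (hbc : b ≠ c) :
    sal q a b * sal q b c + sal q a c * sal q b a = sal q b c * sal q a c := by
  have h1 : b - a ≠ 0 := sub_ne_zero.mpr hab.symm
  have h3 : c - a ≠ 0 := sub_ne_zero.mpr hac.symm
  have h4 : c - b ≠ 0 := sub_ne_zero.mpr hbc.symm
  unfold sal
  rw [show a - b = -(b - a) by ring, div_neg]
  field_simp; ring

theorem sal_tri' (q : K) {a b c : K} (hab : a ≠ b) (hac : a ≠ c) (hbc : b ≠ c) :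
    sal q a b * sal q a c = sal q b c * sal q a b + sal q a c * sal q c b := by
  have h1 : b - a ≠ 0 := sub_ne_zero.mpr hab.symm
  have h3 : c - a ≠ 0 := sub_ne_zero.mpr hac.symm
  have h4 : c - b ≠ 0 := sub_ne_zero.mpr hbc.symm
  unfold sal
  rw [show b - c = -(c - b) by ring, div_neg]
  field_simp; ring

theorem sal_braid (q : K) {a b c : K} (hab : a ≠ b) (hac : a ≠ c) (hbc : b ≠ c) :
    sal q a b * sal q a b * sal q b c + sN q a b * sal q a c =
      sal q b c * sal q b c * sal q a b + sN q b c * sal q a c := by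
  have h1 : b - a ≠ 0 := sub_ne_zero.mpr hab.symm
  have h3 : c - a ≠ 0 := sub_ne_zero.mpr hac.symm
  have h4 : c - b ≠ 0 := sub_ne_zero.mpr hbc.symm
  unfold sal sN
  field_simp; ring

variable {P : Type} {R : P → P → Prop} {n : ℕ}

open LinExt

/-- The off-diagonal coefficient. -/
noncomputable def sbe (q : K) (u : P → K) (x0 : LinExt R n) (A B : P) : K :=
  if x0.1 B < x0.1 A then 1 else sN q (u A) (u B)

theorem sbe_mul (q : K) (u : P → K) (x0 : LinExt R n) {A B : P} (h : A ≠ B) :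
    sbe q u x0 A B * sbe q u x0 B A = sN q (u A) (u B) := by
  have : x0.1 A ≠ x0.1 B := fun h' => h (x0.1.injective h')
  unfold sbe
  rcases lt_or_gt_of_ne this with h' | h'
  · rw [if_neg (not_lt.mpr h'.le), if_pos h', mul_one]
  · rw [if_neg (not_lt.mpr h'.le), if_pos h', one_mul, sN_symm]

/-- The operator interchanging `i` and `j`. -/
noncomputable def opT (q : K) (u : P → K) (x0 : LinExt R n) (i j : Fin n) :
    Module.End K (LinExt R n → K) where
  toFun F := fun x => sal q (u (nd x i)) (u (nd x j)) * F x +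
    sbe q u x0 (nd x i) (nd x j) * (sw i j x).elim 0 F
  map_add' F G := by
    ext x
    cases h : sw i j x <;> simp [h] <;> ring
  map_smul' c F := by
    ext x
    cases h : sw i j x <;> simp [h] <;> ring

theorem opT_apply (q : K) (u : P → K) (x0 : LinExt R n) (i j : Fin n) (F : LinExt R n → K)
    (x : LinExt R n) : opT q u x0 i j F x = sal q (u (nd x i)) (u (nd x j)) * F x +
    sbe q u x0 (nd x i) (nd x j) * (sw i j x).elim 0 F := rfl

theorem nd_ne (x : LinExt R n) {i j : Fin n} (h : i ≠ j) : nd x i ≠ nd x j :=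
  fun h' => h (x.1.symm.injective h')

section rel

variable (q : K) (u : P → K) (x0 : LinExt R n)
  (h1 : ∀ (x : LinExt R n) (i j : Fin n), i.1 < j.1 → j.1 ≤ i.1 + 2 → u (nd x i) ≠ u (nd x j))
  (h2 : ∀ (x : LinExt R n) (i j : Fin n), j.1 = i.1 + 1 → sw i j x = none →
    sN q (u (nd x i)) (u (nd x j)) = 0)

include h1 h2 in
theorem opT_quad {i j : Fin n} (hj : j.1 = i.1 + 1) :
    opT q u x0 i j * opT q u x0 i j = (q - 1) • opT q u x0 i j + q • 1 := by
  have hij : i ≠ j := by intro h; rw [h] at hj; omega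
  refine LinearMap.ext fun F => ?_
  ext x
  have hne := h1 x i j (by omega) (by omega)
  have hquad := sal_quad q hne
  simp only [Module.End.mul_apply, LinearMap.add_apply, LinearMap.smul_apply, Pi.add_apply,
    Pi.smul_apply, Module.End.one_apply, smul_eq_mul]
  rw [opT_apply, opT_apply]
  cases h : sw i j x with
  | none =>
    rw [h2 x i j hj h] at hquad
    simp only [Option.elim]
    linear_combination F x * hquad
  | some y =>
    have hb := sbe_mul q u x0 (nd_ne x hij)
    have ha := sal_add q hne
    simp only [Option.elim]
    rw [opT_apply, sw_symm h, nd_sw_left h, nd_sw_right h]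
    simp only [Option.elim]
    linear_combination F x * hquad + F x * hb + sbe q u x0 (nd x i) (nd x j) * F y * ha

include h1 in
theorem opT_L_left {i j : Fin n} (hj : j.1 = i.1 + 1) (F : LinExt R n → K) :
    opT q u x0 i j (fun x => u (nd x i) * F x) =
      (fun x => u (nd x j) * opT q u x0 i j F x - (q - 1) * (u (nd x j) * F x)) := by
  ext x
  have hne := h1 x i j (by omega) (by omega)
  have h3 : u (nd x j) - u (nd x i) ≠ 0 := sub_ne_zero.mpr hne.symm
  have key : sal q (u (nd x i)) (u (nd x j)) * u (nd x i) = u (nd x j) *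
      sal q (u (nd x i)) (u (nd x j)) - (q - 1) * u (nd x j) := by
    unfold sal; field_simp; ring
  rw [opT_apply, opT_apply]
  cases h : sw i j x with
  | none => simp only [Option.elim]; linear_combination F x * key
  | some y =>
    simp only [Option.elim]
    rw [nd_sw_left h]
    linear_combination F x * key

include h1 in
theorem opT_L_right {i j : Fin n} (hj : j.1 = i.1 + 1) (F : LinExt R n → K) :
    opT q u x0 i j (fun x => u (nd x j) * F x) =
      (fun x => u (nd x i) * opT q u x0 i j F x + (q - 1) * (u (nd x j) * F x)) := by
  ext x
  have hne := h1 x i j (by omega) (by omega)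
  have h3 : u (nd x j) - u (nd x i) ≠ 0 := sub_ne_zero.mpr hne.symm
  have key : sal q (u (nd x i)) (u (nd x j)) * u (nd x j) = u (nd x i) *
      sal q (u (nd x i)) (u (nd x j)) + (q - 1) * u (nd x j) := by
    unfold sal; field_simp; ring
  rw [opT_apply, opT_apply]
  cases h : sw i j x with
  | none => simp only [Option.elim]; linear_combination F x * key
  | some y =>
    simp only [Option.elim]
    rw [nd_sw_right h]
    linear_combination F x * key

theorem opT_L_far {i j k : Fin n} (hi : k ≠ i) (hj : k ≠ j) (F : LinExt R n → K) :
    opT q u x0 i j (fun x => u (nd x k) * F x) =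
      (fun x => u (nd x k) * opT q u x0 i j F x) := by
  ext x
  rw [opT_apply, opT_apply]
  cases h : sw i j x with
  | none => simp only [Option.elim]; ring
  | some y =>
    simp only [Option.elim]
    rw [nd_sw_other h hi hj]
    ring

theorem opT_far {i j k l : Fin n} (hj : j.1 = i.1 + 1) (hl : l.1 = k.1 + 1)
    (hjk : j < k) : opT q u x0 i j * opT q u x0 k l = opT q u x0 k l * opT q u x0 i j := by
  have hjk' : j.1 < k.1 := hjk
  have n1 : k ≠ i := by intro h; rw [h] at hjk'; omega
  have n2 : k ≠ j := by intro h; rw [h] at hjk'; omega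
  have n3 : l ≠ i := by intro h; rw [h] at hl; omega
  have n4 : l ≠ j := by intro h; rw [h] at hl; omega
  refine LinearMap.ext fun F => ?_
  ext x
  simp only [Module.End.mul_apply]
  rw [opT_apply, opT_apply, opT_apply q u x0 k l, opT_apply]
  have hc := sw_comm hj hl hjk x
  cases h : sw i j x with
  | none =>
    cases h' : sw k l x with
    | none => simp only [Option.elim]; ring
    | some y =>
      rw [h, h'] at hc
      simp only [Option.bind_none, Option.bind_some] at hc
      simp only [Option.elim]
      rw [opT_apply, ← hc, nd_sw_other h' n1.symm n3.symm, nd_sw_other h' n2.symm n4.symm]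
      simp only [Option.elim]; ring
  | some y =>
    cases h' : sw k l x with
    | none =>
      rw [h, h'] at hc
      simp only [Option.bind_none, Option.bind_some] at hc
      simp only [Option.elim]
      rw [opT_apply, hc, nd_sw_other h n1 n2, nd_sw_other h n3 n4]
      simp only [Option.elim]; ring
    | some z =>
      rw [h, h'] at hc
      simp only [Option.bind_some] at hc
      simp only [Option.elim]
      rw [opT_apply, opT_apply, hc, nd_sw_other h n1 n2, nd_sw_other h n3 n4,
        nd_sw_other h' n1.symm n3.symm, nd_sw_other h' n2.symm n4.symm]
      ring

include h1 h2 in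
theorem opT_braid {i j k : Fin n} (hj : j.1 = i.1 + 1) (hk : k.1 = j.1 + 1) :
    opT q u x0 i j * opT q u x0 j k * opT q u x0 i j =
      opT q u x0 j k * opT q u x0 i j * opT q u x0 j k := by
  have hij : i ≠ j := by intro h; rw [h] at hj; omega
  have hjk : j ≠ k := by intro h; rw [h] at hk; omega
  have hik : i ≠ k := by intro h; rw [h] at hj; omega
  refine LinearMap.ext fun F => ?_
  ext x
  simp only [Module.End.mul_apply]
  have hab := h1 x i j (by omega) (by omega)
  have hac := h1 x i k (by omega) (by omega)
  have hbc := h1 x j k (by omega) (by omega)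
  have e1 := sal_tri q hab hac hbc
  have e2 := sal_tri' q hab hac hbc
  have e3 := sal_braid q hab hac hbc
  have hN1 := h2 x i j hj
  have hN2 := h2 x j k hk
  have hb1 := sbe_mul q u x0 (nd_ne x hij)
  have hb2 := sbe_mul q u x0 (nd_ne x hjk)
  have hx := hexagon hj hk x
  have hy1 : ∀ y, sw i j x = some y → (opT q u x0 j k) ((opT q u x0 i j) F) y =
      sal q (u (nd x i)) (u (nd x k)) * (sal q (u (nd x j)) (u (nd x i)) * F y +
        sbe q u x0 (nd x j) (nd x i) * F x) + sbe q u x0 (nd x i) (nd x k) *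
        (sal q (u (nd x j)) (u (nd x k)) * (sw j k y).elim 0 F +
          sbe q u x0 (nd x j) (nd x k) * ((sw j k y).bind (sw i j)).elim 0 F) := by
    intro y h
    rw [opT_apply, opT_apply, sw_symm h, nd_sw_left h, nd_sw_right h,
      nd_sw_other h hik.symm hjk.symm]
    cases h' : sw j k y with
    | none => simp only [Option.elim, Option.bind_none]; ring
    | some z =>
      simp only [Option.elim, Option.bind_some]
      rw [opT_apply, nd_sw_left h', nd_sw_other h' hij hik, nd_sw_other h hik.symm hjk.symm,
        nd_sw_left h]
      rfl
  have hy2 : ∀ y, sw j k x = some y → (opT q u x0 i j) ((opT q u x0 j k) F) y =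
      sal q (u (nd x i)) (u (nd x k)) * (sal q (u (nd x k)) (u (nd x j)) * F y +
        sbe q u x0 (nd x k) (nd x j) * F x) + sbe q u x0 (nd x i) (nd x k) *
        (sal q (u (nd x i)) (u (nd x j)) * (sw i j y).elim 0 F +
          sbe q u x0 (nd x i) (nd x j) * ((sw i j y).bind (sw j k)).elim 0 F) := by
    intro y h
    rw [opT_apply, opT_apply, sw_symm h, nd_sw_left h, nd_sw_right h,
      nd_sw_other h hij hik]
    cases h' : sw i j y with
    | none => simp only [Option.elim, Option.bind_none]; ring
    | some z =>
      simp only [Option.elim, Option.bind_some]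
      rw [opT_apply, nd_sw_right h', nd_sw_other h' hik.symm hjk.symm, nd_sw_right h,
        nd_sw_other h hij hik]
      rfl
  have hz1 : ∀ y, sw j k x = some y → opT q u x0 i j F y =
      sal q (u (nd x i)) (u (nd x k)) * F y +
        sbe q u x0 (nd x i) (nd x k) * (sw i j y).elim 0 F := by
    intro y h
    rw [opT_apply, nd_sw_left h, nd_sw_other h hij hik]
  have hz2 : ∀ y, sw i j x = some y → opT q u x0 j k F y =
      sal q (u (nd x i)) (u (nd x k)) * F y +
        sbe q u x0 (nd x i) (nd x k) * (sw j k y).elim 0 F := by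
    intro y h
    rw [opT_apply, nd_sw_right h, nd_sw_other h hik.symm hjk.symm]
  rw [opT_apply q u x0 i j, opT_apply q u x0 j k _ x, opT_apply q u x0 j k _ x,
    opT_apply q u x0 i j _ x, opT_apply q u x0 i j _ x, opT_apply q u x0 j k _ x]
  cases h : sw i j x with
  | none =>
    rw [hN1 h] at e3
    cases h' : sw j k x with
    | none =>
      rw [hN2 h'] at e3
      simp only [Option.elim]
      linear_combination F x * e3
    | some y =>
      rw [h, h'] at hx
      simp only [Option.bind_none, Option.bind_some] at hx
      simp only [Option.elim]
      rw [hy2 y h', hz1 y h', ← hx]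
      simp only [Option.elim]
      linear_combination F x * e3 + sbe q u x0 (nd x j) (nd x k) * F y * e2
        - sal q (u (nd x i)) (u (nd x k)) * F x * hb2
  | some y =>
    cases h' : sw j k x with
    | none =>
      rw [hN2 h'] at e3
      rw [h, h'] at hx
      simp only [Option.bind_none, Option.bind_some] at hx
      simp only [Option.elim]
      rw [hy1 y h, hz2 y h, hx]
      simp only [Option.elim]
      linear_combination F x * e3 + sbe q u x0 (nd x i) (nd x j) * F y * e1
        + sal q (u (nd x i)) (u (nd x k)) * F x * hb1
    | some z =>
      rw [h, h'] at hx
      simp only [Option.bind_some] at hx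
      simp only [Option.elim]
      rw [hy1 y h, hy2 z h', hz1 z h', hz2 y h, hx]
      linear_combination F x * e3 + sbe q u x0 (nd x i) (nd x j) * F y * e1
        + sal q (u (nd x i)) (u (nd x k)) * F x * hb1
        + sbe q u x0 (nd x j) (nd x k) * F z * e2
        - sal q (u (nd x i)) (u (nd x k)) * F x * hb2

end rel

end OpSec

end Paper

namespace Paper

section GramSec

open LinExt

theorem det_tri {Y S : Type*} [Fintype Y] [DecidableEq Y] [CommRing S] (M : Matrix Y Y S)
    (b : Y → ℕ) (h : ∀ s t, s ≠ t → b s ≤ b t → M s t = 0) : M.det = ∏ s, M s s := by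
  rw [Matrix.det_apply, Finset.sum_eq_single 1]
  · simp
  · intro σ _ hσ
    have : ∃ s, σ s ≠ s ∧ b (σ s) ≤ b s := by
      by_contra hc
      push Not at hc
      obtain ⟨s0, hs0⟩ : ∃ s, σ s ≠ s := by
        by_contra hh
        push Not at hh
        exact hσ (Equiv.ext hh)
      have hlt : ∑ s, b s < ∑ s, b (σ s) := by
        apply Finset.sum_lt_sum
        · intro s _
          by_cases hs : σ s = s
          · rw [hs]
          · exact (hc s hs).le
        · exact ⟨s0, Finset.mem_univ _, hc s0 hs0⟩
      rw [Equiv.sum_comp σ b] at hlt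
      exact lt_irrefl _ hlt
    obtain ⟨s, hs, hb⟩ := this
    have hz : ∏ i, M (σ i) i = 0 := Finset.prod_eq_zero (Finset.mem_univ s) (h _ _ hs hb)
    rw [hz, smul_zero]
  · simp

variable {K : Type*} [Field K] {Γ : Type*} [LinearOrderedCommGroupWithZero Γ]
  [MulArchimedean Γ] (v : Valuation K Γ)
variable {P : Type} [Fintype P] {R : P → P → Prop} {n : ℕ}

/-- Inversions of a linear extension relative to the base one. -/
noncomputable def invs (x0 x : LinExt R n) : Finset (P × P) :=
  Finset.univ.filter fun z => x0.1 z.1 < x0.1 z.2 ∧ x.1 z.2 < x.1 z.1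

theorem mem_invs {x0 x : LinExt R n} {A B : P} :
    (A, B) ∈ invs x0 x ↔ x0.1 A < x0.1 B ∧ x.1 B < x.1 A := by simp [invs]

theorem invs_self (x0 : LinExt R n) : invs x0 x0 = ∅ := by
  ext ⟨A, B⟩
  simp only [mem_invs, Finset.notMem_empty, iff_false, not_and, not_lt]
  exact fun h => h.le

theorem app_nd (x : LinExt R n) (k : Fin n) : x.1 (nd x k) = k := by simp [nd]

theorem nd_app (x : LinExt R n) (A : P) : nd x (x.1 A) = A := by simp [nd]

theorem invs_sw {x0 x y : LinExt R n} {i j : Fin n} (hj : j.1 = i.1 + 1)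
    (h : sw i j x = some y) (hlt : x0.1 (nd x i) < x0.1 (nd x j)) :
    (nd x i, nd x j) ∉ invs x0 x ∧ invs x0 y = insert (nd x i, nd x j) (invs x0 x) := by
  rw [sw_eq_some] at h
  constructor
  · rw [mem_invs, app_nd, app_nd]
    rintro ⟨_, h'⟩
    have : j.1 < i.1 := h'
    omega
  · ext ⟨A, B⟩
    rw [Finset.mem_insert, mem_invs, mem_invs, h]
    have hA : A = nd x i ↔ x.1 A = i := by
      constructor
      · rintro rfl; exact app_nd x i
      · intro h; rw [← h, nd_app]
    have hB : B = nd x j ↔ x.1 B = j := by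
      constructor
      · rintro rfl; exact app_nd x j
      · intro h; rw [← h, nd_app]
    have hA' : x.1 A = j → A = nd x j := by
      intro h; rw [← h, nd_app]
    have hB' : x.1 B = i → B = nd x i := by
      intro h; rw [← h, nd_app]
    rw [Prod.mk.injEq]
    constructor
    · rintro ⟨h1, h2⟩
      by_cases hAB : x.1 A = i ∧ x.1 B = j
      · exact Or.inl ⟨hA.mpr hAB.1, hB.mpr hAB.2⟩
      · right
        refine ⟨h1, ?_⟩
        simp only [Equiv.trans_apply, Equiv.swap_apply_def] at h2
        clear hA hB hA' hB' hlt h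
        grind
    · rintro (⟨rfl, rfl⟩ | ⟨h1, h2⟩)
      · refine ⟨hlt, ?_⟩
        simp only [Equiv.trans_apply, app_nd, Equiv.swap_apply_left, Equiv.swap_apply_right]
        rw [Fin.lt_def]; omega
      · refine ⟨h1, ?_⟩
        have hn : ¬ (x.1 A = j ∧ x.1 B = i) := by
          rintro ⟨h3, h4⟩
          rw [hA' h3, hB' h4] at h1
          exact absurd h1 (not_lt.mpr hlt.le)
        simp only [Equiv.trans_apply, Equiv.swap_apply_def]
        clear hA hB hA' hB' hlt h
        grind

/-- The weights of the bilinear form. -/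
noncomputable def gam (q : K) (u : P → K) (x0 : LinExt R n) (g0 : K) (x : LinExt R n) : K :=
  g0 * ∏ z ∈ invs x0 x, sN q (u z.1) (u z.2)

theorem gam_self (q : K) (u : P → K) (x0 : LinExt R n) (g0 : K) : gam q u x0 g0 x0 = g0 := by
  simp [gam, invs_self]

theorem gam_sw_aux (q : K) (u : P → K) {x0 x y : LinExt R n} (g0 : K) {i j : Fin n}
    (hj : j.1 = i.1 + 1)
    (h : sw i j x = some y) (hlt : x0.1 (nd x i) < x0.1 (nd x j)) :
    gam q u x0 g0 x * sbe q u x0 (nd x i) (nd x j) =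
      gam q u x0 g0 y * sbe q u x0 (nd y i) (nd y j) := by
  obtain ⟨h1, h2⟩ := invs_sw hj h hlt
  rw [nd_sw_left h, nd_sw_right h]
  unfold sbe
  rw [if_neg (not_lt.mpr hlt.le), if_pos hlt]
  unfold gam
  rw [h2, Finset.prod_insert h1]
  ring

theorem gam_sw (q : K) (u : P → K) {x0 x y : LinExt R n} (g0 : K) {i j : Fin n}
    (hj : j.1 = i.1 + 1) (h : sw i j x = some y) :
    gam q u x0 g0 x * sbe q u x0 (nd x i) (nd x j) =
      gam q u x0 g0 y * sbe q u x0 (nd y i) (nd y j) := by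
  have hij : i ≠ j := by intro h; rw [h] at hj; omega
  have hne : x0.1 (nd x i) ≠ x0.1 (nd x j) := fun h' => nd_ne x hij (x0.1.injective h')
  rcases lt_or_gt_of_ne hne with h' | h'
  · exact gam_sw_aux q u g0 hj h h'
  · refine (gam_sw_aux q u g0 hj (sw_symm h) ?_).symm
    rwa [nd_sw_left h, nd_sw_right h]

/-- The bilinear form. -/
noncomputable def bil (q : K) (u : P → K) (x0 : LinExt R n) (g0 : K) (F G : LinExt R n → K) : K :=
  ∑ x, gam q u x0 g0 x * F x * G x

theorem opT_adj (q : K) (u : P → K) (x0 : LinExt R n) (g0 : K) {i j : Fin n}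
    (hj : j.1 = i.1 + 1) (F G : LinExt R n → K) :
    bil q u x0 g0 (opT q u x0 i j F) G = bil q u x0 g0 F (opT q u x0 i j G) := by
  have key : ∑ x, gam q u x0 g0 x * sbe q u x0 (nd x i) (nd x j) * (sw i j x).elim 0 F * G x =
      ∑ x, gam q u x0 g0 x * sbe q u x0 (nd x i) (nd x j) * F x * (sw i j x).elim 0 G := by
    have hinv : Function.Involutive (fun x : LinExt R n => (sw i j x).getD x) := by
      intro x
      cases h : sw i j x with
      | none => simp [h]
      | some y => simp [h, sw_symm h]
    rw [← Equiv.sum_comp hinv.toPerm]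
    apply Finset.sum_congr rfl
    intro x _
    simp only [Function.Involutive.coe_toPerm]
    cases h : sw i j x with
    | none => simp [h]
    | some y =>
      simp only [Option.getD_some, sw_symm h, Option.elim]
      rw [← gam_sw q u g0 hj h]
  have e1 : bil q u x0 g0 (opT q u x0 i j F) G =
      ∑ x, gam q u x0 g0 x * sal q (u (nd x i)) (u (nd x j)) * F x * G x +
      ∑ x, gam q u x0 g0 x * sbe q u x0 (nd x i) (nd x j) * (sw i j x).elim 0 F * G x := by
    rw [← Finset.sum_add_distrib]
    apply Finset.sum_congr rfl
    intro x _
    rw [opT_apply]; ring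
  have e2 : bil q u x0 g0 F (opT q u x0 i j G) =
      ∑ x, gam q u x0 g0 x * sal q (u (nd x i)) (u (nd x j)) * F x * G x +
      ∑ x, gam q u x0 g0 x * sbe q u x0 (nd x i) (nd x j) * F x * (sw i j x).elim 0 G := by
    rw [← Finset.sum_add_distrib]
    apply Finset.sum_congr rfl
    intro x _
    rw [opT_apply]; ring
  rw [e1, e2, key]

/-- The ring of integral functions generated by constants and content functions. -/
def funW (v : Valuation K Γ) (u : P → K) : Subring (LinExt R n → K) :=
  Subring.closure ({F | ∃ k, F = fun x => u (nd x k)} ∪ {F | ∃ z, v z ≤ 1 ∧ F = fun _ => z})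

theorem funW_u (u : P → K) (k : Fin n) : (fun x : LinExt R n => u (nd x k)) ∈ funW v u :=
  Subring.subset_closure (Or.inl ⟨k, rfl⟩)

theorem funW_const (u : P → K) {z : K} (hz : v z ≤ 1) :
    (fun _ : LinExt R n => z) ∈ funW v u :=
  Subring.subset_closure (Or.inr ⟨z, hz, rfl⟩)

theorem funW_int (u : P → K) (hu : ∀ A, v (u A) ≤ 1) {F : LinExt R n → K} (hF : F ∈ funW v u)
    (x : LinExt R n) : v (F x) ≤ 1 := by
  induction hF using Subring.closure_induction with
  | mem F hF =>
    rcases hF with ⟨k, rfl⟩ | ⟨z, hz, rfl⟩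
    · exact hu _
    · exact hz
  | zero => simp
  | one => simp
  | add F G hF hG h1 h2 => exact v.map_add_le h1 h2
  | neg F hF h => rw [Pi.neg_apply, Valuation.map_neg]; exact h
  | mul F G hF hG h1 h2 => rw [Pi.mul_apply, map_mul]; exact mul_le_one' h1 h2

/-- Multiplication operators. -/
noncomputable def opD : (LinExt R n → K) →+* Module.End K (LinExt R n → K) :=
  (Algebra.lmul K (LinExt R n → K)).toRingHom

theorem opD_apply (f F : LinExt R n → K) : opD f F = f * F := rfl

/-- The operators `T_j`. -/
noncomputable def opTn (q : K) (u : P → K) (x0 : LinExt R n) (j : ℕ) :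
    Module.End K (LinExt R n → K) :=
  if h : j + 1 < n then opT q u x0 ⟨j, by omega⟩ ⟨j + 1, h⟩ else 0

/-- The integral Hecke algebra acting on functions. -/
noncomputable def algA (v : Valuation K Γ) (q : K) (u : P → K) (x0 : LinExt R n) :
    Subring (Module.End K (LinExt R n → K)) :=
  genRing ((funW v u).map opD) (opTn q u x0) (n - 1)

section main

variable (q : K) (u : P → K) (x0 : LinExt R n)
  (hqv : v q ≤ 1) (hu : ∀ A, v (u A) ≤ 1)
  (h1 : ∀ (x : LinExt R n) (i j : Fin n), i.1 < j.1 → j.1 ≤ i.1 + 2 → u (nd x i) ≠ u (nd x j))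
  (h2 : ∀ (x : LinExt R n) (i j : Fin n), j.1 = i.1 + 1 → sw i j x = none →
    sN q (u (nd x i)) (u (nd x j)) = 0)

include hqv h1 in
theorem opT_W_left {i j : Fin n} (hj : j.1 = i.1 + 1) {f : LinExt R n → K} (hf : f ∈ funW v u) :
    ∃ f' ∈ funW v u, ∃ f'' ∈ funW v u,
      opT q u x0 i j * opD f = opD f' * opT q u x0 i j + opD f'' := by
  have hq1 : v (q - 1) ≤ 1 := v.map_sub_le hqv (by simp)
  induction hf using Subring.closure_induction with
  | mem f hf =>
    rcases hf with ⟨k, rfl⟩ | ⟨z, hz, rfl⟩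
    · by_cases hi : k = i
      · subst hi
        refine ⟨_, funW_u v u j, - ((fun _ => q - 1) * fun x => u (nd x j)),
          neg_mem (mul_mem (funW_const v u hq1) (funW_u v u j)), ?_⟩
        refine LinearMap.ext fun F => ?_
        have := opT_L_left q u x0 h1 hj F
        ext x
        refine (congrFun this x).trans ?_
        simp only [LinearMap.add_apply, Module.End.mul_apply, opD_apply, Pi.add_apply,
          Pi.mul_apply, Pi.neg_apply]
        ring
      · by_cases hkj : k = j
        · subst hkj
          refine ⟨_, funW_u v u i, ((fun _ => q - 1) * fun x => u (nd x k)),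
            (mul_mem (funW_const v u hq1) (funW_u v u k)), ?_⟩
          refine LinearMap.ext fun F => ?_
          have := opT_L_right q u x0 h1 hj F
          ext x
          refine (congrFun this x).trans ?_
          simp only [LinearMap.add_apply, Module.End.mul_apply, opD_apply, Pi.add_apply,
            Pi.mul_apply]
          ring
        · refine ⟨_, funW_u v u k, 0, zero_mem _, ?_⟩
          refine LinearMap.ext fun F => ?_
          have := opT_L_far q u x0 hi hkj F
          ext x
          refine (congrFun this x).trans ?_
          simp only [LinearMap.add_apply, Module.End.mul_apply, opD_apply, Pi.add_apply,
            Pi.mul_apply, Pi.zero_apply]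
          ring
    · refine ⟨_, funW_const v u hz, 0, zero_mem _, ?_⟩
      refine LinearMap.ext fun F => ?_
      have := (opT q u x0 i j).map_smul z F
      ext x
      refine (congrFun this x).trans ?_
      simp only [LinearMap.add_apply, Module.End.mul_apply, opD_apply, Pi.add_apply,
            Pi.mul_apply, Pi.zero_apply, Pi.smul_apply, smul_eq_mul]
      ring
  | zero => exact ⟨0, zero_mem _, 0, zero_mem _, by simp⟩
  | one => exact ⟨1, one_mem _, 0, zero_mem _, by simp⟩
  | add x y hx hy ihx ihy =>
    obtain ⟨a, h, b, h', e⟩ := ihx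
    obtain ⟨c, k, d, k', e'⟩ := ihy
    exact ⟨a + c, add_mem h k, b + d, add_mem h' k', by
      rw [map_add, mul_add, e, e', map_add, map_add, add_mul]; abel⟩
  | neg x hx ihx =>
    obtain ⟨a, h, b, h', e⟩ := ihx
    exact ⟨-a, neg_mem h, -b, neg_mem h', by
      refine LinearMap.ext fun F => ?_
      have e1 : opT q u x0 i j (x * F) = a * opT q u x0 i j F + b * F := LinearMap.congr_fun e F
      change opT q u x0 i j (-x * F) = -a * opT q u x0 i j F + -b * F
      rw [neg_mul, map_neg, e1]; ring⟩
  | mul x y hx hy ihx ihy =>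
    obtain ⟨a, h, b, h', e⟩ := ihx
    obtain ⟨c, k, d, k', e'⟩ := ihy
    refine ⟨a * c, mul_mem h k, a * d + b * y, add_mem (mul_mem h k') (mul_mem h' hy), ?_⟩
    rw [map_mul, ← mul_assoc, e, add_mul, mul_assoc, e', mul_add, map_mul, map_add, map_mul,
      map_mul, mul_assoc, add_assoc]

include hqv h1 in
theorem opT_W_right {i j : Fin n} (hj : j.1 = i.1 + 1) {f : LinExt R n → K} (hf : f ∈ funW v u) :
    ∃ f' ∈ funW v u, ∃ f'' ∈ funW v u,
      opD f * opT q u x0 i j = opT q u x0 i j * opD f' + opD f'' := by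
  have hq1 : v (q - 1) ≤ 1 := v.map_sub_le hqv (by simp)
  induction hf using Subring.closure_induction with
  | mem f hf =>
    rcases hf with ⟨k, rfl⟩ | ⟨z, hz, rfl⟩
    · by_cases hi : k = i
      · subst hi
        refine ⟨_, funW_u v u j, - ((fun _ => q - 1) * fun x => u (nd x j)),
          neg_mem (mul_mem (funW_const v u hq1) (funW_u v u j)), ?_⟩
        refine LinearMap.ext fun F => ?_
        have := opT_L_right q u x0 h1 hj F
        ext x
        have hx := (congrFun this x)
        simp only [LinearMap.add_apply, Module.End.mul_apply, opD_apply, Pi.add_apply,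
          Pi.mul_apply, Pi.neg_apply]
        have e : opT q u x0 k j ((fun x => u (nd x j)) * F) x =
          opT q u x0 k j (fun x => u (nd x j) * F x) x := rfl
        rw [e, hx]
        ring
      · by_cases hkj : k = j
        · subst hkj
          refine ⟨_, funW_u v u i, ((fun _ => q - 1) * fun x => u (nd x k)),
            (mul_mem (funW_const v u hq1) (funW_u v u k)), ?_⟩
          refine LinearMap.ext fun F => ?_
          have := opT_L_left q u x0 h1 hj F
          ext x
          have hx := (congrFun this x)
          simp only [LinearMap.add_apply, Module.End.mul_apply, opD_apply, Pi.add_apply,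
            Pi.mul_apply, Pi.neg_apply]
          have e : opT q u x0 i k ((fun x => u (nd x i)) * F) x =
            opT q u x0 i k (fun x => u (nd x i) * F x) x := rfl
          rw [e, hx]
          ring
        · refine ⟨_, funW_u v u k, 0, zero_mem _, ?_⟩
          refine LinearMap.ext fun F => ?_
          have := opT_L_far q u x0 hi hkj F
          ext x
          refine Eq.trans ?_ ((congrFun this x).symm.trans ?_)
          · rfl
          · simp only [LinearMap.add_apply, Module.End.mul_apply, opD_apply, Pi.add_apply,
              Pi.mul_apply, Pi.zero_apply, zero_mul, add_zero]
            rfl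
    · refine ⟨_, funW_const v u hz, 0, zero_mem _, ?_⟩
      refine LinearMap.ext fun F => ?_
      have := (opT q u x0 i j).map_smul z F
      ext x
      refine Eq.trans ?_ ((congrFun this x).symm.trans ?_)
      · rfl
      · simp only [LinearMap.add_apply, Module.End.mul_apply, opD_apply, Pi.add_apply,
              Pi.mul_apply, Pi.zero_apply, zero_mul, add_zero]
        rfl
  | zero => exact ⟨0, zero_mem _, 0, zero_mem _, by simp⟩
  | one => exact ⟨1, one_mem _, 0, zero_mem _, by simp⟩
  | add x y hx hy ihx ihy =>
    obtain ⟨a, h, b, h', e⟩ := ihx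
    obtain ⟨c, k, d, k', e'⟩ := ihy
    exact ⟨a + c, add_mem h k, b + d, add_mem h' k', by
      rw [map_add, add_mul, e, e', map_add, map_add, mul_add]; abel⟩
  | neg x hx ihx =>
    obtain ⟨a, h, b, h', e⟩ := ihx
    exact ⟨-a, neg_mem h, -b, neg_mem h', by
      refine LinearMap.ext fun F => ?_
      have e1 : x * opT q u x0 i j F = opT q u x0 i j (a * F) + b * F := LinearMap.congr_fun e F
      change -x * opT q u x0 i j F = opT q u x0 i j (-a * F) + -b * F
      rw [neg_mul, e1, neg_mul, map_neg]; ring⟩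
  | mul x y hx hy ihx ihy =>
    obtain ⟨a, h, b, h', e⟩ := ihx
    obtain ⟨c, k, d, k', e'⟩ := ihy
    refine ⟨a * c, mul_mem h k, b * c + x * d, add_mem (mul_mem h' k) (mul_mem hx k'), ?_⟩
    rw [map_mul, mul_assoc, e', mul_add, ← mul_assoc, e, add_mul, map_mul, map_add, map_mul,
      map_mul, mul_assoc, add_assoc]

theorem opT_bdd (i j : Fin n) : OpBdd v {opT q u x0 i j} := by
  obtain ⟨d, hd, h⟩ := exists_common_denom v (Finset.univ : Finset (LinExt R n ⊕ LinExt R n))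
    (Sum.elim (fun x => sal q (u (nd x i)) (u (nd x j)))
      (fun x => sbe q u x0 (nd x i) (nd x j)))
  refine ⟨d, hd, ?_⟩
  rintro a rfl F hF x
  rw [opT_apply, mul_add, ← mul_assoc, ← mul_assoc]
  apply v.map_add_le
  · rw [map_mul]
    exact mul_le_one' (h (Sum.inl x) (Finset.mem_univ _)) (hF x)
  · rw [map_mul]
    refine mul_le_one' (h (Sum.inr x) (Finset.mem_univ _)) ?_
    cases sw i j x with
    | none => simp
    | some y => exact hF y

include hqv hu h1 h2 in
theorem algA_bdd : OpBdd v (algA v q u x0 : Set (Module.End K (LinExt R n → K))) := by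
  apply genRing_bdd v _ _ (n - 1) _ _ _ _ _ _ _ (n - 1) le_rfl
  · rintro j hj a ⟨f, hf, rfl⟩
    have hj' : j + 1 < n := by omega
    obtain ⟨f', hf', f'', hf'', e⟩ := opT_W_left v q u x0 hqv h1
      (i := ⟨j, by omega⟩) (j := ⟨j + 1, hj'⟩) rfl hf
    refine ⟨_, ⟨f', hf', rfl⟩, _, ⟨f'', hf'', rfl⟩, ?_⟩
    rw [opTn, dif_pos hj']
    exact e
  · rintro j hj a ⟨f, hf, rfl⟩
    have hj' : j + 1 < n := by omega
    obtain ⟨f', hf', f'', hf'', e⟩ := opT_W_right v q u x0 hqv h1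
      (i := ⟨j, by omega⟩) (j := ⟨j + 1, hj'⟩) rfl hf
    refine ⟨_, ⟨f', hf', rfl⟩, _, ⟨f'', hf'', rfl⟩, ?_⟩
    rw [opTn, dif_pos hj']
    exact e
  · intro j k hjk hk
    rw [opTn, dif_pos (by omega), opTn, dif_pos (by omega)]
    exact opT_far q u x0 rfl rfl hjk
  · intro j hj
    rw [opTn, dif_pos (by omega), opTn, dif_pos (by omega)]
    exact opT_braid q u x0 h1 h2 rfl rfl
  · intro j hj
    have hq1 : v (q - 1) ≤ 1 := v.map_sub_le hqv (by simp)
    refine ⟨_, ⟨_, funW_const v u hq1, rfl⟩, _, ⟨_, funW_const v u hqv, rfl⟩, ?_⟩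
    rw [opTn, dif_pos (by omega), opT_quad q u x0 h1 h2 rfl]
    rfl
  · refine ⟨1, one_ne_zero, ?_⟩
    rintro a ⟨f, hf, rfl⟩ F hF x
    rw [one_mul]
    change v (f x * F x) ≤ 1
    rw [map_mul]
    exact mul_le_one' (funW_int v u hu hf x) (hF x)
  · intro j hj
    rw [opTn, dif_pos (by omega)]
    exact opT_bdd v q u x0 _ _

theorem algA_D {f : LinExt R n → K} (hf : f ∈ funW v u) : opD f ∈ algA v q u x0 :=
  genRing_W _ _ _ ⟨f, hf, rfl⟩

theorem algA_T {i j : Fin n} (hj : j.1 = i.1 + 1) : opT q u x0 i j ∈ algA v q u x0 := by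
  have := genRing_T ((funW v u).map opD) (opTn q u x0) (m := n - 1) (j := i.1)
    (by have := j.2; omega)
  rw [opTn, dif_pos (by have := j.2; omega)] at this
  have e : j = ⟨i.1 + 1, by have := j.2; omega⟩ := Fin.ext hj
  rw [e]
  exact this

theorem algA_adj (g0 : K) {a : Module.End K (LinExt R n → K)} (ha : a ∈ algA v q u x0) :
    ∃ a' ∈ algA v q u x0, ∀ F G, bil q u x0 g0 (a F) G = bil q u x0 g0 F (a' G) := by
  induction ha using Subring.closure_induction with
  | mem a ha =>
    rcases ha with ⟨f, hf, rfl⟩ | ⟨j, hj, rfl⟩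
    · refine ⟨_, algA_D v q u x0 hf, ?_⟩
      intro F G
      apply Finset.sum_congr rfl
      intro x _
      change _ * (f x * F x) * G x = _ * F x * (f x * G x)
      ring
    · refine ⟨_, genRing_T _ _ hj, ?_⟩
      intro F G
      rw [opTn, dif_pos (by omega)]
      exact opT_adj q u x0 g0 rfl F G
  | zero => exact ⟨0, zero_mem _, by intro F G; simp [bil]⟩
  | one => exact ⟨1, one_mem _, by intro F G; rfl⟩
  | add x y hx hy ihx ihy =>
    obtain ⟨a, h, e⟩ := ihx
    obtain ⟨b, h', e'⟩ := ihy
    refine ⟨a + b, add_mem h h', ?_⟩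
    intro F G
    have e1 := e F G
    have e2 := e' F G
    unfold bil at *
    simp only [LinearMap.add_apply, Pi.add_apply, mul_add, add_mul, Finset.sum_add_distrib]
    rw [e1, e2]
  | neg x hx ihx =>
    obtain ⟨a, h, e⟩ := ihx
    refine ⟨-a, neg_mem h, ?_⟩
    intro F G
    have e1 := e F G
    unfold bil at *
    simp only [LinearMap.neg_apply, Pi.neg_apply, mul_neg, neg_mul, Finset.sum_neg_distrib]
    rw [e1]
  | mul x y hx hy ihx ihy =>
    obtain ⟨a, h, e⟩ := ihx
    obtain ⟨b, h', e'⟩ := ihy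
    refine ⟨b * a, mul_mem h' h, ?_⟩
    intro F G
    rw [Module.End.mul_apply, e, e', Module.End.mul_apply]

/-- The base vector. -/
noncomputable def vec0 (x0 : LinExt R n) : LinExt R n → K := Pi.single x0 1

include hqv hu h1 h2 in
theorem algA_int {g0 : K} {p : LinExt R n → K} (hp : p ∈ funW v u) (hp0 : p x0 = g0)
    (hp1 : ∀ x, x ≠ x0 → p x = 0) {a : Module.End K (LinExt R n → K)}
    (ha : a ∈ algA v q u x0) : v (g0 * a (vec0 x0) x0) ≤ 1 := by
  obtain ⟨d, hd, hb⟩ := algA_bdd v q u x0 hqv hu h1 h2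
  have hm : opD p * a ∈ algA v q u x0 := mul_mem (algA_D v q u x0 hp) ha
  have he : (opD p * a) (vec0 x0) = (g0 * a (vec0 x0) x0) • vec0 x0 := by
    ext x
    rw [Module.End.mul_apply, opD_apply, Pi.mul_apply, Pi.smul_apply]
    by_cases hx : x = x0
    · subst hx; simp [vec0, hp0]
    · simp [vec0, hx, hp1 x hx]
  have hpow : ∀ k : ℕ, ((opD p * a) ^ k) (vec0 x0) = (g0 * a (vec0 x0) x0) ^ k • vec0 x0 := by
    intro k
    induction k with
    | zero => simp
    | succ k ih =>
      rw [pow_succ, Module.End.mul_apply, he, map_smul, ih, smul_smul, pow_succ, mul_comm]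
  apply le_one_of_bdd_pow v hd
  intro k
  have := hb _ (pow_mem hm k) (vec0 x0) (by
    intro x
    by_cases hx : x = x0
    · subst hx; simp [vec0]
    · simp [vec0, hx]) x0
  rw [hpow] at this
  simpa [vec0] using this

theorem exists_descent {t : LinExt R n} (ht : t ≠ x0) :
    ∃ i j : Fin n, j.1 = i.1 + 1 ∧ x0.1 (nd t j) < x0.1 (nd t i) := by
  by_contra hc
  push Not at hc
  apply ht
  have hmono : StrictMono (fun k : Fin n => x0.1 (nd t k)) := by
    have hstep : ∀ d : ℕ, ∀ i j : Fin n, j.1 = i.1 + d + 1 → x0.1 (nd t i) < x0.1 (nd t j) := by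
      intro d
      induction d with
      | zero =>
        intro i j hij
        refine lt_of_le_of_ne (hc i j (by omega)) ?_
        intro h
        have := t.1.symm.injective (x0.1.injective h)
        rw [this] at hij; omega
      | succ d ih =>
        intro i j hij
        have hj := j.2
        let k : Fin n := ⟨i.1 + d + 1, by omega⟩
        refine lt_of_lt_of_le (ih i k rfl) (hc k j ?_)
        change j.1 = (i.1 + d + 1) + 1
        omega
    intro i j hij
    have : i.1 < j.1 := hij
    exact hstep (j.1 - i.1 - 1) i j (by omega)
  let o : Fin n ≃o Fin n := StrictMono.orderIsoOfSurjective _ hmono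
    (fun k => ⟨t.1 (x0.1.symm k), by simp [nd]⟩)
  have ho : o = OrderIso.refl _ := Subsingleton.elim _ _
  apply Subtype.ext
  ext A
  have := congrArg (fun o => o (t.1 A)) ho
  have h2 : x0.1 (nd t (t.1 A)) = t.1 A := this
  rw [nd_app] at h2
  rw [h2]

theorem descent_sw {t : LinExt R n} {i j : Fin n} (hj : j.1 = i.1 + 1)
    (h : x0.1 (nd t j) < x0.1 (nd t i)) : ∃ x, sw i j t = some x := by
  cases hs : sw i j t with
  | some x => exact ⟨x, rfl⟩
  | none =>
    exfalso
    rw [sw_eq_none] at hs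
    obtain ⟨A, B, hAB, hle⟩ := hs
    have hlt := t.2 A B hAB
    have h0 := x0.2 A B hAB
    have hAi : t.1 A = i ∧ t.1 B = j := by
      simp only [Equiv.swap_apply_def] at hle
      clear h0 h
      grind
    rw [← hAi.1, ← hAi.2, nd_app, nd_app] at h
    exact absurd h0 (not_lt.mpr h.le)

theorem card_sw {x y : LinExt R n} {i j : Fin n} (hj : j.1 = i.1 + 1) (h : sw i j x = some y) :
    (invs x0 x).card ≤ (invs x0 y).card + 1 := by
  have hij : i ≠ j := by intro h; rw [h] at hj; omega
  have hne : x0.1 (nd x i) ≠ x0.1 (nd x j) := fun h' => nd_ne x hij (x0.1.injective h')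
  rcases lt_or_gt_of_ne hne with h' | h'
  · obtain ⟨h3, h4⟩ := invs_sw hj h h'
    rw [h4, Finset.card_insert_of_notMem h3]
    omega
  · obtain ⟨h3, h4⟩ := invs_sw (x0 := x0) hj (sw_symm h) (by rwa [nd_sw_left h, nd_sw_right h])
    rw [h4, Finset.card_insert_of_notMem h3]

theorem exists_tri : ∀ (m : ℕ) (t : LinExt R n), (invs x0 t).card = m →
    ∃ a ∈ algA v q u x0, a (vec0 x0) t = 1 ∧
      ∀ s, s ≠ t → m ≤ (invs x0 s).card → a (vec0 x0) s = 0 := by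
  intro m
  induction m using Nat.strong_induction_on with
  | _ m ih =>
  intro t ht
  by_cases htx : t = x0
  · subst htx
    exact ⟨1, one_mem _, by simp [vec0], by intro s hs _; simp [vec0, hs]⟩
  · obtain ⟨i, j, hj, hd⟩ := exists_descent x0 htx
    obtain ⟨x, hx⟩ := descent_sw x0 hj hd
    have hx' := sw_symm hx
    obtain ⟨h3, h4⟩ := invs_sw (x0 := x0) hj hx' (by rwa [nd_sw_left hx, nd_sw_right hx])
    have hcard : (invs x0 t).card = (invs x0 x).card + 1 := by
      rw [h4, Finset.card_insert_of_notMem h3]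
    obtain ⟨a, ha, hax, has⟩ := ih (invs x0 x).card (by omega) x rfl
    have hne : t ≠ x := by intro h; rw [h] at hcard; omega
    refine ⟨opT q u x0 i j * a, mul_mem (algA_T v q u x0 hj) ha, ?_, ?_⟩
    · rw [Module.End.mul_apply, opT_apply, hx, has t hne (by omega)]
      simp only [Option.elim]
      rw [hax, sbe, if_pos hd]; ring
    · intro s hs hms
      have hsx : s ≠ x := by intro h; rw [h] at hms; omega
      rw [Module.End.mul_apply, opT_apply, has s hsx (by omega)]
      cases hsw : sw i j s with
      | none => simp
      | some y =>
        simp only [Option.elim]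
        have hc := card_sw x0 hj hsw
        rw [has y _ (by omega)]
        · ring
        · rintro rfl
          have := sw_symm hsw
          rw [hx'] at this
          exact hs (Option.some.inj this).symm

include hqv hu h1 h2 in
theorem gram_le_one {g0 : K} {p g : LinExt R n → K} (hp : p ∈ funW v u) (hp0 : p x0 = g0)
    (hp1 : ∀ x, x ≠ x0 → p x = 0) (Y : LinExt R n → Prop) (hg : g ∈ funW v u)
    (hg1 : ∀ x, Y x → v (g x) = 1) (hg0 : ∀ x, ¬ Y x → g x = 0) :
    v (∏ x : {x // Y x}, gam q u x0 g0 x.1) ≤ 1 := by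
  choose h hA hone hzero using fun t => exists_tri v q u x0 _ t rfl
  let M : Matrix {x // Y x} {x // Y x} K := fun s x => g x.1 * h s.1 (vec0 x0) x.1
  have hM : M.det = ∏ s : {x // Y x}, g s.1 := by
    rw [det_tri M (fun s => (invs x0 s.1).card)]
    · apply Finset.prod_congr rfl
      intro s _
      simp only [M]
      rw [hone, mul_one]
    · intro s t hst hle
      simp only [M]
      rw [hzero s.1 t.1 (fun h => hst (Subtype.ext h.symm)) hle, mul_zero]
  let G : Matrix {x // Y x} {x // Y x} K := fun s t =>
    bil q u x0 g0 (opD g (h s.1 (vec0 x0))) (opD g (h t.1 (vec0 x0)))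
  have hG : G = M * Matrix.diagonal (fun x : {x // Y x} => gam q u x0 g0 x.1) * M.transpose := by
    ext s t
    have key : ∀ f : LinExt R n → K, (∀ x, ¬ Y x → f x = 0) →
        ∑ x, f x = ∑ x : {x // Y x}, f x.1 := by
      intro f hf
      rw [← Finset.sum_subtype (Finset.univ.filter Y) (by simp) f, Finset.sum_filter]
      apply Finset.sum_congr rfl
      intro x _
      split_ifs with hx
      · rfl
      · exact hf x hx
    rw [Matrix.mul_apply]
    refine (key _ ?_).trans ?_
    · intro x hx
      simp [opD_apply, hg0 x hx]
    · apply Finset.sum_congr rfl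
      intro x _
      rw [Matrix.mul_diagonal, Matrix.transpose_apply]
      change gam q u x0 g0 x.1 * (g x.1 * h s.1 (vec0 x0) x.1) * (g x.1 * h t.1 (vec0 x0) x.1) =
        g x.1 * h s.1 (vec0 x0) x.1 * gam q u x0 g0 x.1 * (g x.1 * h t.1 (vec0 x0) x.1)
      ring
  have hGint : ∀ s t, v (G s t) ≤ 1 := by
    intro s t
    obtain ⟨a', ha', e⟩ := algA_adj v q u x0 g0
      (mul_mem (algA_D v q u x0 hg) (hA s.1))
    have e1 := e (vec0 x0) ((opD g * h t.1) (vec0 x0))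
    have e2 : G s t = g0 * (a' * (opD g * h t.1)) (vec0 x0) x0 := by
      refine Eq.trans e1 ?_
      unfold bil
      rw [Finset.sum_eq_single x0]
      · rw [gam_self]; simp [vec0]
      · intro x _ hx; simp [vec0, hx]
      · simp
    rw [e2]
    exact algA_int v q u x0 hqv hu h1 h2 hp hp0 hp1
      (mul_mem ha' (mul_mem (algA_D v q u x0 hg) (hA t.1)))
  have hdet : v G.det ≤ 1 := by
    rw [← Valuation.mem_integer_iff, Matrix.det_apply']
    refine Subring.sum_mem _ fun σ _ => Subring.mul_mem _ (intCast_mem _ _) ?_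
    exact Subring.prod_mem _ fun s _ => hGint _ _
  rw [hG, Matrix.det_mul, Matrix.det_mul, Matrix.det_transpose, Matrix.det_diagonal, hM, map_mul,
    map_mul] at hdet
  have hv : v (∏ s : {x // Y x}, g s.1) = 1 := by
    rw [map_prod]
    exact Finset.prod_eq_one fun s _ => hg1 s.1 s.2
  rwa [hv, one_mul, mul_one] at hdet

end main

end GramSec

end Paper

namespace Paper

section ValSec
open Polynomial IsDedekindDomain

theorem exists_val (e : ℕ) (he : 2 ≤ e) : ∃ (K : Type) (_ : Field K)
    (v : Valuation K (WithZero (Multiplicative ℤ))) (q : K), q ≠ 0 ∧ v q = 1 ∧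
    ∀ d : ℤ, d ≠ 0 → v (q ^ d - 1) = if (e : ℤ) ∣ d then WithZero.exp (-1) else 1 := by
  obtain ⟨ζ, hζ⟩ : ∃ ζ : ℂ, IsPrimitiveRoot ζ e :=
    ⟨_, Complex.isPrimitiveRoot_exp e (by omega)⟩
  have hpr : Prime (X - C ζ : ℂ[X]) := prime_X_sub_C ζ
  let P : HeightOneSpectrum ℂ[X] := ⟨Ideal.span {X - C ζ},
    (Ideal.span_singleton_prime hpr.ne_zero).mpr hpr, by
      simpa [Ideal.span_singleton_eq_bot] using hpr.ne_zero⟩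
  have hone : ∀ f : ℂ[X], f.eval ζ ≠ 0 → P.valuation (RatFunc ℂ) (algebraMap _ _ f) = 1 := by
    intro f hf
    rw [HeightOneSpectrum.valuation_of_algebraMap, HeightOneSpectrum.intValuation_eq_one_iff]
    change f ∉ Ideal.span {X - C ζ}
    rw [Ideal.mem_span_singleton, dvd_iff_isRoot]
    exact hf
  have hX : P.valuation (RatFunc ℂ) (algebraMap _ _ (X - C ζ : ℂ[X])) = WithZero.exp (-1) := by
    rw [HeightOneSpectrum.valuation_of_algebraMap]
    exact HeightOneSpectrum.intValuation_singleton _ hpr.ne_zero rfl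
  have hζ0 : ζ ≠ 0 := hζ.ne_zero (by omega)
  have hq0 : (algebraMap ℂ[X] (RatFunc ℂ) X) ≠ 0 := by
    simpa using RatFunc.X_ne_zero
  have hq1 : P.valuation (RatFunc ℂ) (algebraMap ℂ[X] (RatFunc ℂ) X) = 1 :=
    hone X (by simpa using hζ0)
  have hnat : ∀ d : ℕ, d ≠ 0 → P.valuation (RatFunc ℂ) ((algebraMap ℂ[X] (RatFunc ℂ) X) ^ d - 1) =
      if (e : ℤ) ∣ d then WithZero.exp (-1) else 1 := by
    intro d hd
    have hm : (algebraMap ℂ[X] (RatFunc ℂ) X) ^ d - 1 = algebraMap ℂ[X] (RatFunc ℂ) (X ^ d - 1) := by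
      simp
    rw [hm]
    split_ifs with h
    · have h' : e ∣ d := by exact_mod_cast h
      have hroot : (X ^ d - 1 : ℂ[X]).IsRoot ζ := by
        simp only [IsRoot, eval_sub, eval_pow, eval_X, eval_one]
        rw [(hζ.pow_eq_one_iff_dvd d).mpr h', sub_self]
      obtain ⟨Q, hQ⟩ := dvd_iff_isRoot.mpr hroot
      have hder := congrArg (fun f => (derivative f).eval ζ) hQ
      simp at hder
      have hQ0 : Q.eval ζ ≠ 0 := by
        rw [← hder]
        have hd' : (d : ℂ) ≠ 0 := by exact_mod_cast hd
        rw [derivative_X_pow]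
        simpa using ⟨hd, fun h => absurd h hζ0⟩
      rw [hQ, map_mul, map_mul, hX, hone Q hQ0, mul_one]
    · apply hone
      simp only [eval_sub, eval_pow, eval_X, eval_one]
      intro h0
      apply h
      have := (hζ.pow_eq_one_iff_dvd d).mp (sub_eq_zero.mp h0)
      exact_mod_cast this
  refine ⟨RatFunc ℂ, inferInstance, P.valuation (RatFunc ℂ), algebraMap _ _ X, hq0, hq1, ?_⟩
  intro d hd
  rcases Int.eq_nat_or_neg d with ⟨m, rfl | rfl⟩
  · rw [zpow_natCast]
    exact hnat m (by omega)
  · simp only [Int.dvd_neg]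
    rw [← hnat m (by omega), zpow_neg, zpow_natCast]
    set Q := algebraMap ℂ[X] (RatFunc ℂ) X
    have : (Q ^ m)⁻¹ - 1 = - ((Q ^ m)⁻¹ * (Q ^ m - 1)) := by
      have : Q ^ m ≠ 0 := pow_ne_zero _ hq0
      field_simp; ring
    rw [this, Valuation.map_neg, map_mul, map_inv₀, map_pow, hq1]
    simp

end ValSec
end Paper

namespace Paper

section DegFormula

/-- indicator of zero in `ZMod e` -/
noncomputable def J {e : ℕ} (z : ZMod e) : ℤ := if z = 0 then 1 else 0

/-- the quiver weight -/
noncomputable def nu {e : ℕ} (z : ZMod e) : ℤ := J (z - 1) + J (z + 1) - 2 * J z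

theorem sum_nu {e : ℕ} (a : ZMod e) (L : ℕ) :
    ∑ c ∈ Finset.range L, nu (a + (c : ZMod e)) =
      J (a - 1) - J (a + (L : ZMod e) - 1) + J (a + (L : ZMod e)) - J a := by
  induction L with
  | zero => simp
  | succ L ih =>
    rw [Finset.sum_range_succ, ih, nu]
    have h1 : a + ((L + 1 : ℕ) : ZMod e) - 1 = a + L := by push_cast; ring
    have h2 : a + ((L + 1 : ℕ) : ZMod e) = a + L + 1 := by push_cast; ring
    rw [h1, h2]
    ring

noncomputable def addI {e : ℕ} (a : ZMod e) (L : ℕ → ℕ) (r : ℕ) : ℤ :=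
  if (r = 0 ∨ L r < L (r - 1)) ∧ a - r + L r = 0 then 1 else 0

noncomputable def remI {e : ℕ} (a : ZMod e) (L : ℕ → ℕ) (r : ℕ) : ℤ :=
  if L (r + 1) < L r ∧ a - r + L r - 1 = 0 then 1 else 0

noncomputable def rowI {e : ℕ} (a : ZMod e) (L : ℕ → ℕ) (r : ℕ) : ℤ :=
  ∑ c ∈ Finset.range (L r), nu (a - (r : ZMod e) + (c : ZMod e))

theorem comp_aux {e : ℕ} (a : ZMod e) (L : ℕ → ℕ) (hL : Antitone L) (s : ℕ)
    (hs : s = 0 ∨ L s < L (s - 1)) (M : ℕ) :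
    ∑ j ∈ Finset.range (M + 1), addI a L (s + j) -
      ∑ j ∈ Finset.range M, (remI a L (s + j) + rowI a L (s + j)) =
    J (a - (s : ZMod e)) + J (a - ((s + M : ℕ) : ZMod e) + (L (s + M) : ZMod e)) - J (a - ((s + M : ℕ) : ZMod e)) := by
  induction M with
  | zero =>
    simp only [zero_add, Finset.range_one, Finset.sum_singleton, Finset.range_zero,
      Finset.sum_empty, add_zero, addI, hs, true_and, J]
    ring
  | succ M ih =>
    rw [Finset.sum_range_succ _ (M + 1),
      Finset.sum_range_succ (fun j => remI a L (s + j) + rowI a L (s + j)) M]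
    have key : addI a L (s + (M + 1)) - remI a L (s + M) =
        J (a - ((s + (M + 1) : ℕ) : ZMod e) + (L (s + (M + 1)) : ZMod e)) -
        J (a - ((s + M : ℕ) : ZMod e) + (L (s + M) : ZMod e) - 1) := by
      have h1 : s + (M + 1) - 1 = s + M := by omega
      have h2 : s + M + 1 = s + (M + 1) := by omega
      have h3 : ¬ (s + (M + 1) = 0) := by omega
      unfold addI remI J
      rw [h1, h2]
      rcases lt_or_eq_of_le (hL (show s + M ≤ s + (M + 1) by omega)) with h | h
      · simp [h]
      · simp only [h3, h, lt_irrefl, or_self, false_and]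
        have : a - ((s + (M + 1) : ℕ) : ZMod e) + L (s + M) =
          a - ((s + M : ℕ) : ZMod e) + L (s + M) - 1 := by push_cast; ring
        rw [this]; simp
    have hrow : rowI a L (s + M) = _ := sum_nu _ _
    have h4 : a - ((s + M : ℕ) : ZMod e) - 1 = a - ((s + (M + 1) : ℕ) : ZMod e) := by
      push_cast; ring
    rw [h4] at hrow
    linarith

theorem comp_sum {e : ℕ} (a : ZMod e) (L : ℕ → ℕ) (hL : Antitone L) (s : ℕ)
    (hs : s = 0 ∨ L s < L (s - 1)) (M : ℕ) (hM : L (s + M) = 0) :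
    ∑ j ∈ Finset.range (M + 1), (addI a L (s + j) - remI a L (s + j) - rowI a L (s + j)) =
    J (a - (s : ZMod e)) := by
  have h := comp_aux a L hL s hs M
  rw [hM] at h
  have h1 : remI a L (s + M) = 0 := by
    unfold remI; simp [hM]
  have h2 : rowI a L (s + M) = 0 := by
    unfold rowI; simp [hM]
  rw [Finset.sum_range_succ] at h ⊢
  simp only [Finset.sum_add_distrib, Finset.sum_sub_distrib, Nat.cast_zero, add_zero] at h ⊢
  linarith

theorem exists_len {ℓ : ℕ} {S : Set Node} (hS : IsDiagramSet ℓ S) :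
    ∃ len : ℕ → ℕ → ℕ, (∀ l r c, (l, r, c) ∈ S ↔ c < len l r) ∧ (∀ l, Antitone (len l)) ∧
      (∀ l, ℓ ≤ l → ∀ r, len l r = 0) ∧ ∃ N, ∀ l r, N ≤ r → len l r = 0 := by
  obtain ⟨hf, hl, hr, hc⟩ := hS
  have hex : ∀ l r, ∃ c, (l, r, c) ∉ S := by
    intro l r
    by_contra! h
    have : Set.Infinite S := Set.infinite_of_injective_forall_mem
      (f := fun c : ℕ => ((l, r, c) : Node)) (fun a b hab => by simpa using hab) h
    exact this hf
  let len : ℕ → ℕ → ℕ := fun l r => Nat.find (hex l r)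
  have hlen : ∀ l r c, (l, r, c) ∈ S ↔ c < len l r := by
    intro l r c
    constructor
    · intro h
      by_contra! h'
      obtain ⟨d, rfl⟩ := Nat.exists_eq_add_of_le h'
      have : ∀ d, (l, r, len l r + d) ∈ S → (l, r, len l r) ∈ S := by
        intro d
        induction d with
        | zero => exact id
        | succ d ih => exact fun h => ih (hr _ _ _ h)
      exact Nat.find_spec (hex l r) (this d h)
    · intro h
      by_contra h'
      exact Nat.find_min (hex l r) h h'
  refine ⟨len, hlen, ?_, ?_, ?_⟩
  · intro l
    apply antitone_nat_of_succ_le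
    intro r
    by_contra! h
    exact absurd ((hlen l r _).mp (hc _ _ _ ((hlen l (r+1) _).mpr h))) (lt_irrefl _)
  · intro l h r
    by_contra h'
    have := hl _ ((hlen l r 0).mpr (by omega))
    simp at this; omega
  · obtain ⟨N, hN⟩ := (hf.image (fun A : Node => A.2.1)).bddAbove
    refine ⟨N + 1, fun l r h => ?_⟩
    by_contra h'
    have := hN ⟨_, (hlen l r 0).mpr (by omega), rfl⟩
    simp at this; omega

theorem addable_iff {ℓ : ℕ} {S : Set Node} (hS : IsDiagramSet ℓ S) {len : ℕ → ℕ → ℕ}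
    (hlen : ∀ l r c, (l, r, c) ∈ S ↔ c < len l r) (l r c : ℕ) :
    Addable ℓ S (l, r, c) ↔ l < ℓ ∧ c = len l r ∧ (r = 0 ∨ len l r < len l (r - 1)) := by
  obtain ⟨hf, hl, hr, hc⟩ := hS
  constructor
  · rintro ⟨hn, -, h2, h3, h4⟩
    rw [hlen] at hn
    have hcl : c = len l r := by
      rcases c with _ | c
      · omega
      · have := h3 l r c (Or.inr rfl)
        rcases this with h | h
        · rw [hlen] at h; omega
        · simp at h
    refine ⟨h2 _ (Or.inr rfl), hcl, ?_⟩
    rcases r with _ | r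
    · exact Or.inl rfl
    · right
      have := h4 l r c (Or.inr rfl)
      rcases this with h | h
      · rw [hlen] at h; simp; omega
      · simp at h
  · rintro ⟨h1, rfl, h3⟩
    refine ⟨by rw [hlen]; omega, hf.union (Set.finite_singleton _), ?_, ?_, ?_⟩
    · rintro A (h | h)
      · exact hl A h
      · rw [Set.mem_singleton_iff] at h; subst h; exact h1
    · rintro l' r' c' (h | h)
      · exact Or.inl (hr _ _ _ h)
      · simp only [Set.mem_singleton_iff, Prod.mk.injEq] at h
        obtain ⟨rfl, rfl, h⟩ := h
        left; rw [hlen]; omega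
    · rintro l' r' c' (h | h)
      · exact Or.inl (hc _ _ _ h)
      · simp only [Set.mem_singleton_iff, Prod.mk.injEq] at h
        obtain ⟨rfl, rfl, rfl⟩ := h
        left; rw [hlen]; simpa using h3

theorem removable_iff {ℓ : ℕ} {S : Set Node} (hS : IsDiagramSet ℓ S) {len : ℕ → ℕ → ℕ}
    (hlen : ∀ l r c, (l, r, c) ∈ S ↔ c < len l r) (l r c : ℕ) :
    Removable ℓ S (l, r, c) ↔ c + 1 = len l r ∧ len l (r + 1) < len l r := by
  obtain ⟨hf, hl, hr, hc⟩ := hS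
  constructor
  · rintro ⟨hn, -, h2, h3, h4⟩
    rw [hlen] at hn
    have hcl : c + 1 = len l r := by
      by_contra h
      have := h3 l r c ⟨(hlen _ _ _).mpr (by omega), by simp⟩
      exact this.2 rfl
    refine ⟨hcl, ?_⟩
    by_contra! h
    have := h4 l r c ⟨(hlen _ _ _).mpr (by omega), by simp⟩
    exact this.2 rfl
  · rintro ⟨h1, h2⟩
    refine ⟨by rw [hlen]; omega, hf.subset Set.sdiff_subset, ?_, ?_, ?_⟩
    · rintro A ⟨h, -⟩
      exact hl A h
    · rintro l' r' c' ⟨h, -⟩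
      refine ⟨hr _ _ _ h, ?_⟩
      rintro h'
      simp only [Set.mem_singleton_iff, Prod.mk.injEq] at h'
      obtain ⟨rfl, rfl, rfl⟩ := h'
      rw [hlen] at h; omega
    · rintro l' r' c' ⟨h, -⟩
      refine ⟨hc _ _ _ h, ?_⟩
      rintro h'
      simp only [Set.mem_singleton_iff, Prod.mk.injEq] at h'
      obtain ⟨rfl, rfl, rfl⟩ := h'
      rw [hlen] at h; omega

/-- the contribution of the empty part of the diagram -/
noncomputable def headI (ℓ e : ℕ) (κ : ℕ → ℤ) (A : Node) : ℤ :=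
  J (((κ A.1 - (A.2.1 + 1) : ℤ) : ZMod e) - resNode e κ A) +
    ∑ m ∈ Finset.Ioo A.1 ℓ, J (((κ m : ℤ) : ZMod e) - resNode e κ A)

theorem ncard_rows (W : Finset (ℕ × ℕ)) (T : Set Node) (f : ℕ → ℕ → ℕ) (Q : ℕ → ℕ → Prop)
    (h : ∀ l r c, (l, r, c) ∈ T ↔ (l, r) ∈ W ∧ c = f l r ∧ Q l r) :
    (T.ncard : ℤ) = ∑ w ∈ W, if Q w.1 w.2 then 1 else 0 := by
  have : T = ((W.filter fun w => Q w.1 w.2).image (fun w => ((w.1, w.2, f w.1 w.2) : Node)) :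
      Finset Node) := by
    ext ⟨l, r, c⟩
    rw [h]
    simp only [Finset.coe_image, Finset.coe_filter, Set.mem_image, Set.mem_ofPred_eq,
      Prod.exists, Prod.mk.injEq]
    constructor
    · rintro ⟨h1, rfl, h2⟩
      exact ⟨l, r, ⟨h1, h2⟩, rfl, rfl, rfl⟩
    · rintro ⟨l, r, ⟨h1, h2⟩, rfl, rfl, rfl⟩
      exact ⟨h1, rfl, h2⟩
  rw [this, Set.ncard_coe_finset, Finset.card_image_of_injective]
  · simp
  · rintro ⟨a, b⟩ ⟨c, d⟩ h
    simp only [Prod.mk.injEq] at h ⊢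
    exact ⟨h.1, h.2.1⟩

theorem dNode_formula {ℓ e : ℕ} (he : 2 ≤ e) (κ : ℕ → ℤ) {S : Set Node}
    (hS : IsDiagramSet ℓ S) (A : Node) (hA : Removable ℓ S A) :
    dNode ℓ e κ S A = headI ℓ e κ A +
      ∑ B ∈ hS.1.toFinset.filter (fun B => nodeBelow A B),
        nu (resNode e κ B - resNode e κ A) := by
  obtain ⟨len, hlen, hanti, hz, N, hN⟩ := exists_len hS
  obtain ⟨l0, r0, c0⟩ := A
  have hA1 := (removable_iff hS hlen l0 r0 c0).mp hA
  have hl0 : l0 < ℓ := hS.2.1 _ hA.1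
  have hr0 : r0 < N := by
    by_contra! h
    have := hN l0 r0 h
    omega
  have : Fact (1 < e) := ⟨by omega⟩
  set i := resNode e κ (l0, r0, c0) with hi
  have hie : i = ((κ l0 : ℤ) : ZMod e) + c0 - r0 := by
    simp [hi, resNode]
  let later : ℕ → ℕ → Prop := fun l r => l0 < l ∨ (l = l0 ∧ r0 < r)
  let W : Finset (ℕ × ℕ) := (Finset.range ℓ ×ˢ Finset.range (N + 1)).filter
    (fun w => later w.1 w.2)
  have hW : ∀ l r, (l, r) ∈ W ↔ (l < ℓ ∧ r < N + 1) ∧ later l r := by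
    intro l r; simp [W]
  let a : ℕ → ZMod e := fun l => ((κ l : ℤ) : ZMod e) - i
  have hadd : ((Set.ncard {B | Addable ℓ S B ∧ resNode e κ B = i ∧
      nodeBelow (l0, r0, c0) B} : ℕ) : ℤ) = ∑ w ∈ W, addI (a w.1) (len w.1) w.2 := by
    refine (ncard_rows W _ len (fun l r => (r = 0 ∨ len l r < len l (r - 1)) ∧
      a l - r + len l r = 0) ?_).trans
      (Finset.sum_congr rfl fun w _ => by unfold addI; congr)
    intro l r c
    simp only [Set.mem_ofPred_eq, addable_iff hS hlen, hW]
    simp only [resNode, nodeBelow, later, a]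
    constructor
    · rintro ⟨⟨h1, rfl, h2⟩, h3, h4⟩
      refine ⟨⟨⟨h1, ?_⟩, ?_⟩, rfl, h2, ?_⟩
      · by_contra! h
        rcases h2 with h2 | h2
        · omega
        · rw [hN l (r - 1) (by omega)] at h2; omega
      · rcases h4 with h4 | ⟨h4, h5 | ⟨h5, h6⟩⟩
        · exact Or.inl h4
        · exact Or.inr ⟨h4.symm, h5⟩
        · exfalso
          subst h4 h5
          rw [← hA1.1, hie] at h3
          push_cast at h3
          have : (1 : ZMod e) = 0 := by linear_combination h3
          exact one_ne_zero this
      · rw [← h3]; push_cast; ring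
    · rintro ⟨⟨⟨h1, h2⟩, h3⟩, rfl, h4, h5⟩
      refine ⟨⟨h1, rfl, h4⟩, ?_, ?_⟩
      · push_cast; linear_combination h5
      · rcases h3 with h3 | ⟨rfl, h3⟩
        · exact Or.inl h3
        · exact Or.inr ⟨rfl, Or.inl h3⟩
  have hrem : ((Set.ncard {B | Removable ℓ S B ∧ resNode e κ B = i ∧
      nodeBelow (l0, r0, c0) B} : ℕ) : ℤ) = ∑ w ∈ W, remI (a w.1) (len w.1) w.2 := by
    refine (ncard_rows W _ (fun l r => len l r - 1)
      (fun l r => len l (r + 1) < len l r ∧ a l - r + len l r - 1 = 0) ?_).trans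
      (Finset.sum_congr rfl fun w _ => by unfold remI; congr)
    intro l r c
    simp only [Set.mem_ofPred_eq, removable_iff hS hlen, hW]
    simp only [resNode, nodeBelow, later, a]
    constructor
    · rintro ⟨⟨h1, h2⟩, h3, h4⟩
      refine ⟨⟨⟨?_, ?_⟩, ?_⟩, by omega, h2, ?_⟩
      · by_contra! h
        have := hz l h r
        omega
      · by_contra! h
        have := hN l r (by omega)
        omega
      · rcases h4 with h4 | ⟨h4, h5 | ⟨h5, h6⟩⟩
        · exact Or.inl h4
        · exact Or.inr ⟨h4.symm, h5⟩
        · exfalso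
          subst h4 h5
          omega
      · rw [← h3, ← h1]; push_cast; ring
    · rintro ⟨⟨⟨h1, h2⟩, h3⟩, h6, h4, h5⟩
      have h7 : c + 1 = len l r := by omega
      refine ⟨⟨h7, h4⟩, ?_, ?_⟩
      · rw [← h7] at h5; push_cast at h5 ⊢; linear_combination h5
      · rcases h3 with h3 | ⟨rfl, h3⟩
        · exact Or.inl h3
        · exact Or.inr ⟨rfl, Or.inl h3⟩
  have hrow : ∑ B ∈ hS.1.toFinset.filter (fun B => nodeBelow (l0, r0, c0) B),
        nu (resNode e κ B - i) = ∑ w ∈ W, rowI (a w.1) (len w.1) w.2 := by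
    unfold rowI
    rw [Finset.sum_sigma']
    refine Finset.sum_bij' (fun B _ => ⟨(B.1, B.2.1), B.2.2⟩) (fun w _ => (w.1.1, w.1.2, w.2))
      ?_ ?_ ?_ ?_ ?_
    · rintro ⟨l, r, c⟩ hB
      simp only [Finset.mem_filter, Set.Finite.mem_toFinset] at hB
      obtain ⟨h1, h2⟩ := hB
      have h1' := h1
      rw [hlen] at h1
      simp only [Finset.mem_sigma, hW, Finset.mem_range]
      refine ⟨⟨⟨hS.2.1 _ h1', ?_⟩, ?_⟩, h1⟩
      · by_contra! h
        have := hN l r (by omega)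
        omega
      · rcases h2 with h4 | ⟨h4, h5 | ⟨h5, h6⟩⟩
        · exact Or.inl h4
        · exact Or.inr ⟨h4.symm, h5⟩
        · exfalso
          simp only at h4 h5 h6
          subst h4 h5
          omega
    · rintro ⟨⟨l, r⟩, c⟩ hB
      simp only [Finset.mem_sigma, hW, Finset.mem_range] at hB
      simp only [Finset.mem_filter, Set.Finite.mem_toFinset]
      obtain ⟨⟨-, h3⟩, h4⟩ := hB
      refine ⟨(hlen _ _ _).mpr h4, ?_⟩
      rcases h3 with h3 | ⟨rfl, h3⟩
      · exact Or.inl h3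
      · exact Or.inr ⟨rfl, Or.inl h3⟩
    · rintro ⟨l, r, c⟩ hB; rfl
    · rintro ⟨⟨l, r⟩, c⟩ hB; rfl
    · rintro ⟨l, r, c⟩ hB
      simp only [resNode, a]
      congr 1
      push_cast; ring
  unfold dNode
  rw [← hi, hadd, hrem, hrow]
  suffices hsuff : ∑ w ∈ W, (addI (a w.1) (len w.1) w.2 - remI (a w.1) (len w.1) w.2 -
      rowI (a w.1) (len w.1) w.2) = headI ℓ e κ (l0, r0, c0) by
    simp only [Finset.sum_sub_distrib] at hsuff
    linarith
  simp only [W]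
  rw [Finset.sum_filter, Finset.sum_product]
  have hcomp : ∀ l ∈ Finset.range ℓ, (∑ r ∈ Finset.range (N + 1), if later l r then
      (addI (a l) (len l) r - remI (a l) (len l) r - rowI (a l) (len l) r) else 0) =
      (if l = l0 then J (a l - ((r0 + 1 : ℕ) : ZMod e)) else 0) +
        (if l ∈ Finset.Ioo l0 ℓ then J (a l) else 0) := by
    intro l hl
    rw [Finset.mem_range] at hl
    rcases lt_trichotomy l l0 with h | h | h
    · rw [if_neg (by omega), if_neg (by simp; omega)]
      apply Finset.sum_eq_zero
      intro r _
      rw [if_neg]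
      simp only [later]; omega
    · subst h
      rw [if_pos rfl, if_neg (by simp), add_zero]
      have := comp_sum (a l) (len l) (hanti l) (r0 + 1) (Or.inr (by simpa using hA1.2))
        (N - r0 - 1) (hN _ _ (by omega))
      rw [← this, ← Finset.sum_filter]
      symm
      apply Finset.sum_nbij' (fun j => r0 + 1 + j) (fun r => r - (r0 + 1))
      · intro j hj
        simp only [Finset.mem_range, Finset.mem_filter, later] at hj ⊢
        refine ⟨by omega, Or.inr ⟨trivial, by omega⟩⟩
      · intro j hj
        simp only [Finset.mem_range, Finset.mem_filter, later] at hj ⊢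
        omega
      · intro j hj; simp
      · intro j hj
        simp only [Finset.mem_range, Finset.mem_filter, later] at hj ⊢
        omega
      · intro j hj; rfl
    · rw [if_neg (by omega), if_pos (by simp; omega), zero_add]
      have := comp_sum (a l) (len l) (hanti l) 0 (Or.inl rfl) N (hN _ _ (by omega))
      simp only [zero_add, Nat.cast_zero, sub_zero] at this
      rw [← this]
      apply Finset.sum_congr rfl
      intro r _
      rw [if_pos (Or.inl h)]
  rw [Finset.sum_congr rfl hcomp, Finset.sum_add_distrib]
  rw [Finset.sum_ite_eq' (Finset.range ℓ) l0, if_pos (Finset.mem_range.mpr hl0),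
    ← Finset.sum_filter]
  unfold headI
  congr 1
  · simp only [a, ← hi]; congr 1; push_cast; ring
  · rw [show (Finset.range ℓ).filter (fun l => l ∈ Finset.Ioo l0 ℓ) = Finset.Ioo l0 ℓ by
      ext m; simp]

end DegFormula
end Paper

namespace Paper

section Diagram
open LinExt

/-- nodes of the diagram of `μ` -/
abbrev Pn {ℓ n : ℕ} (μ : Multipartition ℓ n) : Type := {A : Node // A ∈ μ.diagram}

/-- the strict north-west order on nodes -/
def NW {ℓ n : ℕ} (μ : Multipartition ℓ n) (A B : Pn μ) : Prop :=
  A.1.1 = B.1.1 ∧ A.1.2.1 ≤ B.1.2.1 ∧ A.1.2.2 ≤ B.1.2.2 ∧ A ≠ B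

variable {ℓ n : ℕ} {μ : Multipartition ℓ n}

theorem mem_dia {l r c : ℕ} : ((l, r, c) : Node) ∈ μ.diagram ↔ c < μ.part l r := Iff.rfl

theorem dia_le {l r c r' c' : ℕ} (h : ((l, r, c) : Node) ∈ μ.diagram) (hr : r' ≤ r)
    (hc : c' ≤ c) : ((l, r', c') : Node) ∈ μ.diagram := by
  rw [mem_dia] at h ⊢
  have := μ.antitone l hr
  omega

theorem dia_bd {l r c : ℕ} (h : ((l, r, c) : Node) ∈ μ.diagram) : l < ℓ ∧ r < n ∧ c < n := by
  rw [mem_dia] at h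
  have h1 : l < ℓ := by
    by_contra! h'
    have := μ.comp_bound l h' r
    omega
  have h2 : r < n := by
    by_contra! h'
    have := μ.row_bound l r h'
    omega
  refine ⟨h1, h2, ?_⟩
  have h3 : μ.part l r ≤ ∑ r ∈ Finset.range n, μ.part l r :=
    Finset.single_le_sum (f := fun r => μ.part l r) (fun _ _ => Nat.zero_le _)
      (Finset.mem_range.mpr h2)
  have h4 : ∑ r ∈ Finset.range n, μ.part l r ≤ _ :=
    Finset.single_le_sum (f := fun l => ∑ r ∈ Finset.range n, μ.part l r)
      (fun _ _ => Nat.zero_le _) (Finset.mem_range.mpr h1)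
  rw [μ.size] at h4
  omega

theorem NW_mk {l r c r' c' : ℕ} {h : ((l, r, c) : Node) ∈ μ.diagram}
    {h' : ((l, r', c') : Node) ∈ μ.diagram} (h1 : r ≤ r') (h2 : c ≤ c')
    (h3 : r < r' ∨ c < c') : NW μ ⟨(l, r, c), h⟩ ⟨(l, r', c'), h'⟩ := by
  refine ⟨rfl, h1, h2, ?_⟩
  intro h
  simp only [Subtype.mk.injEq, Prod.mk.injEq] at h
  omega

theorem nodeBelow_tri (A B : Node) (h : A ≠ B) (h' : ¬ nodeBelow A B) : nodeBelow B A := by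
  obtain ⟨a, b, c⟩ := A
  obtain ⟨a', b', c'⟩ := B
  simp only [nodeBelow, ne_eq, Prod.mk.injEq] at *
  omega

theorem nodeBelow_irrefl (A : Node) : ¬ nodeBelow A A := by
  simp [nodeBelow]

theorem exists_enum {Q L : Type} [Fintype Q] [LinearOrder L] (g : Q → L)
    (hg : Function.Injective g) {n : ℕ} (hcard : Fintype.card Q = n) :
    ∃ f : Q ≃ Fin n, ∀ A B, f A < f B ↔ g A < g B := by
  let _ : LinearOrder Q := LinearOrder.lift' g hg
  let o := Fintype.orderIsoFinOfCardEq Q hcard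
  refine ⟨o.symm.toEquiv, fun A B => ?_⟩
  exact o.symm.lt_iff_lt

/-- the row reading extension -/
theorem exists_x0 [Fintype (Pn μ)] (hcard : Fintype.card (Pn μ) = n) :
    ∃ x0 : LinExt (NW μ) n, ∀ A B, x0.1 A < x0.1 B ↔ nodeBelow A.1 B.1 := by
  let g : Pn μ → ℕ ×ₗ (ℕ ×ₗ ℕ) := fun A => toLex (A.1.1, toLex (A.1.2.1, A.1.2.2))
  have hg : Function.Injective g := by
    rintro ⟨⟨a, b, c⟩, h⟩ ⟨⟨a', b', c'⟩, h'⟩ hab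
    simp only [g, EmbeddingLike.apply_eq_iff_eq, Prod.mk.injEq] at hab
    obtain ⟨rfl, rfl, rfl⟩ := hab
    rfl
  have hlt : ∀ A B, g A < g B ↔ nodeBelow A.1 B.1 := by
    intro A B
    simp only [g, Prod.Lex.toLex_lt_toLex, nodeBelow]
  obtain ⟨f, hf⟩ := exists_enum g hg hcard
  have ho : ∀ A B : Pn μ, f A < f B ↔ nodeBelow A.1 B.1 := fun A B => (hf A B).trans (hlt A B)
  refine ⟨⟨f, ?_⟩, ho⟩
  intro A B hAB
  apply (ho A B).mpr
  obtain ⟨h1, h2, h3, h4⟩ := hAB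
  obtain ⟨⟨a, b, c⟩, h⟩ := A
  obtain ⟨⟨a', b', c'⟩, h'⟩ := B
  simp only [nodeBelow, ne_eq, Subtype.mk.injEq, Prod.mk.injEq] at *
  omega

theorem exists_charge (e n : ℕ) (he : 2 ≤ e) (κ : ℕ → ℤ) : ∃ κ' : ℕ → ℤ,
    (∀ l, ((κ' l : ℤ) : ZMod e) = ((κ l : ℤ) : ZMod e)) ∧
    ∀ l m, l < m → κ' m + (2 * n + 4) ≤ κ' l := by
  refine ⟨fun l => κ l % e - l * e * (2 * n + 4), ?_, ?_⟩
  · intro l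
    simp
  · intro l m hlm
    have h1 := Int.emod_nonneg (κ l) (b := e) (by omega)
    have h2 := Int.emod_lt_of_pos (κ m) (b := e) (by omega)
    have h3 : ((l : ℤ) + 1) * (e * (2 * n + 4)) ≤ m * (e * (2 * n + 4)) := by
      apply mul_le_mul_of_nonneg_right
      · exact_mod_cast hlm
      · positivity
    have h4 : (2 : ℤ) * (2 * n + 3) ≤ e * (2 * n + 3) := by
      apply mul_le_mul_of_nonneg_right
      · exact_mod_cast he
      · positivity
    simp only
    nlinarith

/-- degree of a linear extension -/
noncomputable def degX [Fintype (Pn μ)] (e : ℕ) (κ : ℕ → ℤ) (x0 x : LinExt (NW μ) n) : ℤ :=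
  ∑ A : Pn μ, headI ℓ e κ A.1 +
    ∑ z ∈ invs x0 x, nu (resNode e κ z.2.1 - resNode e κ z.1.1)

theorem J_neg {e : ℕ} (z : ZMod e) : J (-z) = J z := by simp [J]

set_option maxHeartbeats 400000 in
theorem degX_sum_nonneg [Fintype (Pn μ)] (e : ℕ) (he : 2 ≤ e) (κ : ℕ → ℤ)
    (x0 : LinExt (NW μ) n) (hx0 : ∀ A B, x0.1 A < x0.1 B ↔ nodeBelow A.1 B.1)
    (i : Fin n → ZMod e) :
    0 ≤ ∑ x : {x : LinExt (NW μ) n // ∀ k, resNode e κ (nd x k).1 = i k},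
      degX e κ x0 x.1 := by
  obtain ⟨K, hK, v, q, hq0, hq1, hval⟩ := exists_val e he
  obtain ⟨κ', hκ, hsep⟩ := exists_charge e n he κ
  let ct : Pn μ → ℤ := fun A => κ' A.1.1 + A.1.2.2 - A.1.2.1
  let u : Pn μ → K := fun A => q ^ ct A
  have hct : ∀ A, ((ct A : ℤ) : ZMod e) = resNode e κ A.1 := by
    intro A
    simp only [ct, resNode]
    push_cast
    rw [hκ]
  have hqz : ∀ a : ℤ, v (q ^ a) = 1 := by
    intro a; rw [map_zpow₀, hq1, one_zpow]
  have hdiff : ∀ a b : ℤ, a ≠ b → v (q ^ a - q ^ b) =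
      WithZero.exp (-(J ((a : ZMod e) - (b : ZMod e)))) := by
    intro a b hab
    have h1 : q ^ a - q ^ b = q ^ b * (q ^ (a - b) - 1) := by
      rw [mul_sub, ← zpow_add₀ hq0]; simp
    rw [h1, map_mul, hqz, one_mul, hval _ (sub_ne_zero.mpr hab)]
    have h2 : ((a : ZMod e) - (b : ZMod e) = 0) ↔ (e : ℤ) ∣ a - b := by
      rw [← ZMod.intCast_zmod_eq_zero_iff_dvd, Int.cast_sub]
    unfold J
    by_cases h : (e : ℤ) ∣ a - b
    · rw [if_pos h, if_pos (h2.mpr h)]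
    · rw [if_neg h, if_neg (fun h' => h (h2.mp h'))]; simp
  have hqinj : ∀ a b : ℤ, q ^ a = q ^ b → a = b := by
    intro a b hab
    by_contra h
    have := hdiff a b h
    rw [hab, sub_self, map_zero] at this
    exact WithZero.exp_ne_zero this.symm
  -- content facts
  have hcomp : ∀ A B : Pn μ, A.1.1 < B.1.1 → ct B + 2 ≤ ct A := by
    rintro ⟨⟨l, r, c⟩, h⟩ ⟨⟨l', r', c'⟩, h'⟩ hlt
    have h1 := dia_bd h
    have h2 := dia_bd h'
    simp only at hlt
    have h3 := hsep _ _ hlt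
    simp only [ct]
    omega
  have h1 : ∀ (x : LinExt (NW μ) n) (i j : Fin n), i.1 < j.1 → j.1 ≤ i.1 + 2 →
      u (nd x i) ≠ u (nd x j) := by
    intro x i j hij hji heq
    have heq := hqinj _ _ heq
    have hxA := app_nd x i
    have hxB := app_nd x j
    generalize nd x i = A at *
    generalize nd x j = B at *
    subst hxA hxB
    rcases lt_trichotomy A.1.1 B.1.1 with hl | hl | hl
    · have := hcomp _ _ hl; omega
    · obtain ⟨⟨l, r, c⟩, h⟩ := A
      obtain ⟨⟨l', r', c'⟩, h'⟩ := B
      simp only at hl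
      subst hl
      simp only [ct] at heq
      rcases lt_trichotomy r r' with hr | hr | hr
      · let C1 : Pn μ := ⟨(l, r, c + 1), dia_le h' (by omega) (by omega)⟩
        let C2 : Pn μ := ⟨(l, r + 1, c), dia_le h' (by omega) (by omega)⟩
        have e1 := x.2 ⟨(l, r, c), h⟩ C1 (NW_mk (by omega) (by omega) (by omega))
        have e2 := x.2 ⟨(l, r, c), h⟩ C2 (NW_mk (by omega) (by omega) (by omega))
        have e3 := x.2 C1 ⟨(l, r', c'), h'⟩ (NW_mk (by omega) (by omega) (by omega))
        have e4 := x.2 C2 ⟨(l, r', c'), h'⟩ (NW_mk (by omega) (by omega) (by omega))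
        have e5 : x.1 C1 ≠ x.1 C2 := by
          intro h0
          have := x.1.injective h0
          simp [C1, C2] at this
        rw [Fin.lt_def] at e1 e2 e3 e4
        rw [ne_eq, Fin.ext_iff] at e5
        omega
      · subst hr
        have : c = c' := by omega
        subst this
        omega
      · have e1 := x.2 ⟨(l, r', c'), h'⟩ ⟨(l, r, c), h⟩ (NW_mk (by omega) (by omega) (by omega))
        rw [Fin.lt_def] at e1
        omega
    · have := hcomp _ _ hl; omega
  have h2 : ∀ (x : LinExt (NW μ) n) (i j : Fin n), j.1 = i.1 + 1 → sw i j x = none →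
      sN q (u (nd x i)) (u (nd x j)) = 0 := by
    intro x i j hij hsw
    obtain ⟨A, B, hAB, hle⟩ := sw_eq_none.mp hsw
    have hlt := x.2 A B hAB
    have hAi : x.1 A = i ∧ x.1 B = j := by
      generalize x.1 A = a at *
      generalize x.1 B = b at *
      rw [Equiv.swap_apply_def, Equiv.swap_apply_def] at hle
      rw [Fin.lt_def] at hlt
      rw [Fin.le_def] at hle
      simp only [Fin.ext_iff] at hle ⊢
      split_ifs at hle <;> omega
    have hA : nd x i = A := by rw [← hAi.1, nd_app]
    have hB : nd x j = B := by rw [← hAi.2, nd_app]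
    rw [hA, hB]
    have hno : ∀ C, NW μ A C → ¬ NW μ C B := by
      intro C hC1 hC2
      have e1 := x.2 _ _ hC1
      have e2 := x.2 _ _ hC2
      rw [hAi.1] at e1
      rw [hAi.2] at e2
      rw [Fin.lt_def] at e1 e2
      omega
    clear hA hB hAi hlt hle
    obtain ⟨⟨l, r, c⟩, h⟩ := A
    obtain ⟨⟨l', r', c'⟩, h'⟩ := B
    obtain ⟨g1, g2, g3, g4⟩ := hAB
    simp only at g1 g2 g3
    subst g1
    simp only [ne_eq, Subtype.mk.injEq, Prod.mk.injEq, true_and] at g4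
    simp only [u, ct, sN]
    by_cases hr : r < r'
    · have hk : r' = r + 1 ∧ c' = c := by
        by_contra hne
        exact hno ⟨(l, r + 1, c), dia_le h' (by omega) (by omega)⟩
          (NW_mk (by omega) (by omega) (by omega)) (NW_mk (by omega) (by omega) (by omega))
      obtain ⟨rfl, rfl⟩ := hk
      have : q * q ^ (κ' l + (c' : ℤ) - ((r + 1 : ℕ) : ℤ)) = q ^ (κ' l + (c' : ℤ) - (r : ℤ)) := by
        rw [← zpow_one_add₀ hq0]; congr 1; push_cast; ring
      rw [this, sub_self]; simp
    · have hk : r' = r ∧ c' = c + 1 := by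
        by_contra hne
        exact hno ⟨(l, r, c + 1), dia_le h' (by omega) (by omega)⟩
          (NW_mk (by omega) (by omega) (by omega)) (NW_mk (by omega) (by omega) (by omega))
      obtain ⟨rfl, rfl⟩ := hk
      have : q * q ^ (κ' l + (c : ℤ) - (r' : ℤ)) = q ^ (κ' l + ((c + 1 : ℕ) : ℤ) - (r' : ℤ)) := by
        rw [← zpow_one_add₀ hq0]; congr 1; push_cast; ring
      rw [this, sub_self]; simp
  -- valuation of `sN` at an inversion
  have hinv : ∀ (x : LinExt (NW μ) n), ∀ z ∈ invs x0 x, v (sN q (u z.1) (u z.2)) =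
      WithZero.exp (-(nu (resNode e κ z.2.1 - resNode e κ z.1.1))) := by
    rintro x ⟨A, B⟩ hz
    obtain ⟨hz1, hz2⟩ := mem_invs.mp hz
    rw [hx0] at hz1
    have hge : ct B + 2 ≤ ct A := by
      rcases hz1 with hz1 | ⟨hz1, hz3⟩
      · exact hcomp _ _ hz1
      · have hnot : ¬ NW μ A B := fun h => absurd (x.2 _ _ h) (not_lt.mpr hz2.le)
        obtain ⟨⟨l, r, c⟩, h⟩ := A
        obtain ⟨⟨l', r', c'⟩, h'⟩ := B
        simp only at hz1 hz3
        subst hz1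
        have hcc : ¬ c ≤ c' := fun hc => hnot (NW_mk (by omega) hc (by omega))
        simp only [ct]
        omega
    simp only
    rw [← hct, ← hct]
    simp only [u]
    unfold sN
    rw [map_div₀, map_mul, map_pow, ← zpow_one_add₀ hq0, ← zpow_one_add₀ hq0,
      hdiff _ _ (by omega), hdiff _ _ (by omega), hdiff _ _ (by omega)]
    rw [← WithZero.exp_add, ← WithZero.exp_nsmul, ← WithZero.exp_sub]
    congr 1
    unfold nu
    push_cast
    have a1 : (1 + (ct B : ZMod e) - (ct A : ZMod e)) = (ct B : ZMod e) - (ct A : ZMod e) + 1 := by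
      ring
    have a2 : ((ct B : ZMod e) - (1 + (ct A : ZMod e))) =
      (ct B : ZMod e) - (ct A : ZMod e) - 1 := by ring
    rw [a1, a2]
    simp only [nsmul_eq_mul]
    push_cast
    ring
  -- heads
  let hd : Pn μ → Pn μ → K := fun A B => (u B - q ^ (κ' A.1.1 - (A.1.2.1 + 1))) *
    ∏ m ∈ Finset.Ioo A.1.1 ℓ, (u B - q ^ (κ' m))
  have hexp_prod : ∀ {ι : Type} (s : Finset ι) (f : ι → ℤ),
      ∏ a ∈ s, (WithZero.exp (-(f a)) : WithZero (Multiplicative ℤ)) =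
        WithZero.exp (-(∑ a ∈ s, f a)) := by
    intro ι s f
    induction s using Finset.induction_on with
    | empty => simp
    | insert a s ha ih =>
      rw [Finset.prod_insert ha, Finset.sum_insert ha, ih, ← WithZero.exp_add]
      congr 1; ring
  have hhd : ∀ A, v (hd A A) = WithZero.exp (-(headI ℓ e κ A.1)) := by
    rintro ⟨⟨l, r, c⟩, h⟩
    have hb := dia_bd h
    simp only [hd, map_mul, map_prod, u]
    rw [hdiff _ _ (by simp only [ct]; omega)]
    have : ∀ m ∈ Finset.Ioo l ℓ, v (q ^ ct ⟨(l, r, c), h⟩ - q ^ κ' m) =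
        WithZero.exp (-(J (((κ m : ℤ) : ZMod e) - resNode e κ (l, r, c)))) := by
      intro m hm
      rw [Finset.mem_Ioo] at hm
      have := hsep l m hm.1
      rw [hdiff _ _ (by simp only [ct]; omega), hct, hκ, ← J_neg, neg_sub]
    rw [Finset.prod_congr rfl this, hexp_prod, ← WithZero.exp_add]
    congr 1
    unfold headI
    rw [hct, ← J_neg, neg_sub]
    push_cast
    rw [hκ]
    ring
  let g0 : K := ∏ A : Pn μ, hd A A
  have hg0v : v g0 = WithZero.exp (-(∑ A : Pn μ, headI ℓ e κ A.1)) := by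
    simp only [g0, map_prod]
    rw [Finset.prod_congr rfl (fun A _ => hhd A), hexp_prod]
  have hgam : ∀ x, v (gam q u x0 g0 x) = WithZero.exp (-(degX e κ x0 x)) := by
    intro x
    unfold gam degX
    rw [map_mul, hg0v, map_prod, Finset.prod_congr rfl (hinv x), hexp_prod, ← WithZero.exp_add]
    congr 1; ring
  let p : LinExt (NW μ) n → K := ∏ k : Fin n,
    (((fun x => u (nd x k)) - fun _ => q ^ (κ' (nd x0 k).1.1 - ((nd x0 k).1.2.1 + 1))) *
    ∏ m ∈ Finset.Ioo (nd x0 k).1.1 ℓ, ((fun x => u (nd x k)) - fun _ => q ^ (κ' m)))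
  have hpx : ∀ x, p x = ∏ k, hd (nd x0 k) (nd x k) := by
    intro x
    simp only [p, Finset.prod_apply, Pi.mul_apply, Pi.sub_apply, hd]
  have hp : p ∈ funW v u := by
    apply Subring.prod_mem
    intro k _
    apply Subring.mul_mem
    · exact Subring.sub_mem _ (funW_u v u k) (funW_const v u (hqz _).le)
    · apply Subring.prod_mem
      intro m _
      exact Subring.sub_mem _ (funW_u v u k) (funW_const v u (hqz _).le)
  have hp0 : p x0 = g0 := by
    rw [hpx]
    exact Equiv.prod_comp x0.1.symm (fun A => hd A A)
  have hp1 : ∀ x, x ≠ x0 → p x = 0 := by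
    intro x hx
    have hex : ∃ k, nd x k ≠ nd x0 k := by
      by_contra! h
      apply hx
      apply Subtype.ext
      have : x.1.symm = x0.1.symm := Equiv.ext h
      simpa using congrArg Equiv.symm this
    obtain ⟨k, hk, hmin⟩ : ∃ k, nd x k ≠ nd x0 k ∧ ∀ j < k, nd x j = nd x0 j := by
      let s : Set (Fin n) := {k | nd x k ≠ nd x0 k}
      have hs : s.Nonempty := hex
      refine ⟨wellFounded_lt.min s hs, wellFounded_lt.min_mem s hs, ?_⟩
      intro j hj
      by_contra h
      exact wellFounded_lt.not_lt_min s h hj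
    rw [hpx]
    apply Finset.prod_eq_zero (Finset.mem_univ k)
    have hxB := app_nd x k
    have hxA := app_nd x0 k
    have hlow : ∀ C, NW μ C (nd x k) → nodeBelow C.1 (nd x0 k).1 := by
      intro C hC
      have e1 := x.2 _ _ hC
      rw [hxB] at e1
      have e2 := hmin _ e1
      rw [nd_app] at e2
      rw [← hx0, hxA]
      have e3 : x0.1 C = x.1 C := by
        conv_lhs => rw [e2]
        rw [app_nd]
      rw [e3]; exact e1
    have hAB : nodeBelow (nd x0 k).1 (nd x k).1 := by
      apply nodeBelow_tri _ _ (fun h => hk (Subtype.ext h))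
      rw [← hx0, hxA]
      intro hlt
      have e2 := hmin _ hlt
      rw [nd_app] at e2
      have := congrArg x.1 e2
      rw [app_nd, app_nd] at this
      rw [this] at hlt
      exact lt_irrefl _ hlt
    generalize nd x k = B at *
    generalize nd x0 k = A at *
    clear hxA hxB hmin
    obtain ⟨⟨l, r, c⟩, h⟩ := A
    obtain ⟨⟨l', r', c'⟩, h'⟩ := B
    have hb := dia_bd h'
    simp only [hd, u, ct]
    rcases hAB with hll | ⟨hll, hrr⟩
    · simp only at hll
      have h00 : r' = 0 ∧ c' = 0 := by
        by_contra hne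
        have := hlow ⟨(l', 0, 0), dia_le h' (by omega) (by omega)⟩
          (NW_mk (by omega) (by omega) (by omega))
        simp only [nodeBelow] at this
        omega
      obtain ⟨rfl, rfl⟩ := h00
      apply mul_eq_zero_of_right
      apply Finset.prod_eq_zero (Finset.mem_Ioo.mpr ⟨hll, hb.1⟩)
      simp
    · simp only at hll hrr
      subst hll
      have h00 : r' = r + 1 ∧ c' = 0 := by
        rcases hrr with hrr | ⟨hrr, hcc⟩
        · by_contra hne
          by_cases hc : c' = 0
          · subst hc
            have := hlow ⟨(l, r' - 1, 0), dia_le h' (by omega) (by omega)⟩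
              (NW_mk (by omega) (by omega) (by omega))
            simp only [nodeBelow] at this
            omega
          · have := hlow ⟨(l, r', 0), dia_le h' (by omega) (by omega)⟩
              (NW_mk (by omega) (by omega) (by omega))
            simp only [nodeBelow] at this
            omega
        · exfalso
          have := hlow ⟨(l, r, c), h⟩ (NW_mk (by omega) (by omega) (by omega))
          exact nodeBelow_irrefl _ this
      obtain ⟨rfl, rfl⟩ := h00
      apply mul_eq_zero_of_left
      rw [sub_eq_zero]
      congr 1
      push_cast; ring
  let g : LinExt (NW μ) n → K := ∏ k : Fin n,
    ∏ A ∈ (Finset.univ : Finset (Pn μ)).filter (fun A => resNode e κ A.1 ≠ i k),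
      ((fun x => u (nd x k)) - fun _ => u A)
  have hg : g ∈ funW v u := by
    apply Subring.prod_mem
    intro k _
    apply Subring.prod_mem
    intro m _
    exact Subring.sub_mem _ (funW_u v u k) (funW_const v u (hqz _).le)
  have hgx : ∀ x, g x = ∏ k : Fin n,
    ∏ A ∈ (Finset.univ : Finset (Pn μ)).filter (fun A => resNode e κ A.1 ≠ i k),
      (u (nd x k) - u A) := by
    intro x
    simp only [g, Finset.prod_apply, Pi.sub_apply]
  have hg1 : ∀ x, (∀ k, resNode e κ (nd x k).1 = i k) → v (g x) = 1 := by
    intro x hY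
    rw [hgx, map_prod]
    apply Finset.prod_eq_one
    intro k _
    rw [map_prod]
    apply Finset.prod_eq_one
    intro A hA
    have hA := (Finset.mem_filter.mp hA).2
    have hne : resNode e κ (nd x k).1 - resNode e κ A.1 ≠ 0 := by
      rw [hY]; exact fun h => hA (sub_eq_zero.mp h).symm
    have hne' : ct (nd x k) ≠ ct A := by
      intro h
      rw [← hct, ← hct, h, sub_self] at hne
      exact hne rfl
    simp only [u]
    rw [hdiff _ _ hne', hct, hct, J, if_neg hne]
    simp
  have hg0 : ∀ x, ¬ (∀ k, resNode e κ (nd x k).1 = i k) → g x = 0 := by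
    intro x hY
    push Not at hY
    obtain ⟨k, hk⟩ := hY
    rw [hgx]
    apply Finset.prod_eq_zero (Finset.mem_univ k)
    apply Finset.prod_eq_zero (i := nd x k)
    · simpa using hk
    · simp
  have hfin := gram_le_one v q u x0 hq1.le (fun A => (hqz _).le) h1 h2 hp hp0 hp1
    (fun x => ∀ k, resNode e κ (nd x k).1 = i k) hg hg1 hg0
  rw [map_prod, Finset.prod_congr rfl (fun x _ => hgam x.1), hexp_prod] at hfin
  have key : ∀ z : ℤ, (WithZero.exp (-z) : WithZero (Multiplicative ℤ)) ≤ 1 → 0 ≤ z := by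
    intro z hz
    rw [← WithZero.exp_zero, WithZero.exp_le_exp] at hz
    exact neg_nonpos.mp hz
  have hsum := key _ hfin
  convert hsum

end Diagram
end Paper

namespace Paper

section Transfer
open LinExt

variable {ℓ n : ℕ} {μ : Multipartition ℓ n}

theorem app_nd2 (x : LinExt (NW μ) n) (k : Fin n) : x.1 (nd x k) = k := by simp [nd]

noncomputable def entX (x : LinExt (NW μ) n) (A : Node) : ℕ :=
  if h : A ∈ μ.diagram then (x.1 ⟨A, h⟩).1 + 1 else 0

theorem entX_mem (x : LinExt (NW μ) n) (A : Pn μ) : entX x A.1 = (x.1 A).1 + 1 := by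
  simp [entX, A.2]

/-- the standard tableau of a linear extension -/
noncomputable def toT (x : LinExt (NW μ) n) : StdTableau ℓ n where
  shape := μ
  entry := entX x
  entry_zero := fun A h => by simp [entX, h]
  bijOn := by
    refine ⟨?_, ?_, ?_⟩
    · intro A hA
      rw [entX_mem x ⟨A, hA⟩]
      have := (x.1 ⟨A, hA⟩).2
      simp only [Set.mem_Icc]; omega
    · intro A hA B hB hAB
      rw [entX_mem x ⟨A, hA⟩, entX_mem x ⟨B, hB⟩] at hAB
      have := x.1.injective (Fin.ext (by omega : (x.1 ⟨A, hA⟩).1 = (x.1 ⟨B, hB⟩).1))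
      exact congrArg Subtype.val this
    · intro k hk
      simp only [Set.mem_Icc] at hk
      refine ⟨(nd x ⟨k - 1, by omega⟩).1, (nd x ⟨k - 1, by omega⟩).2, ?_⟩
      rw [entX_mem, app_nd2]
      simp only; omega
  row_inc := by
    intro l r c h
    have h' : ((l, r, c) : Node) ∈ μ.diagram := dia_le h le_rfl (Nat.le_succ c)
    rw [entX_mem x ⟨_, h⟩, entX_mem x ⟨_, h'⟩]
    have := x.2 ⟨_, h'⟩ ⟨_, h⟩ (NW_mk le_rfl (Nat.le_succ c) (Or.inr (Nat.lt_succ_self c)))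
    rw [Fin.lt_def] at this
    omega
  col_inc := by
    intro l r c h
    have h' : ((l, r, c) : Node) ∈ μ.diagram := dia_le h (Nat.le_succ r) le_rfl
    rw [entX_mem x ⟨_, h⟩, entX_mem x ⟨_, h'⟩]
    have := x.2 ⟨_, h'⟩ ⟨_, h⟩ (NW_mk (Nat.le_succ r) le_rfl (Or.inl (Nat.lt_succ_self r)))
    rw [Fin.lt_def] at this
    omega

theorem toT_node (x : LinExt (NW μ) n) (k : Fin n) : (toT x).node (k.1 + 1) = (nd x k).1 := by
  have hex : ∃ A ∈ μ.diagram, entX x A = k.1 + 1 :=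
    ⟨(nd x k).1, (nd x k).2, by rw [entX_mem, app_nd2]⟩
  have h1 : Function.invFunOn (entX x) μ.diagram (k.1 + 1) ∈ μ.diagram :=
    Function.invFunOn_mem hex
  have h2 : entX x (Function.invFunOn (entX x) μ.diagram (k.1 + 1)) = k.1 + 1 :=
    Function.invFunOn_eq hex
  apply (toT x).bijOn.2.1 h1 (nd x k).2
  change entX x (Function.invFunOn (entX x) μ.diagram (k.1 + 1)) = entX x (nd x k).1
  rw [h2, entX_mem, app_nd2]

theorem toT_inj {x y : LinExt (NW μ) n} (h : toT x = toT y) : x = y := by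
  apply Subtype.ext
  apply Equiv.ext
  intro A
  have h1 : entX x = entX y := congrArg StdTableau.entry h
  have h2 := congrFun h1 A.1
  rw [entX_mem, entX_mem] at h2
  exact Fin.ext (by omega)

theorem entry_mono (T : StdTableau ℓ n) {l r c r' c' : ℕ} (h : ((l, r', c') : Node) ∈ T.shape.diagram)
    (hr : r ≤ r') (hc : c ≤ c') : T.entry (l, r, c) ≤ T.entry (l, r', c') := by
  obtain ⟨a, rfl⟩ := Nat.exists_eq_add_of_le hr
  obtain ⟨b, rfl⟩ := Nat.exists_eq_add_of_le hc
  have h1 : ∀ a, ((l, r + a, c) : Node) ∈ T.shape.diagram →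
      T.entry (l, r, c) ≤ T.entry (l, r + a, c) := by
    intro a
    induction a with
    | zero => intro _; exact le_rfl
    | succ a ih =>
      intro h
      exact (ih (dia_le h (by omega) le_rfl)).trans (T.col_inc _ _ _ h).le
  have h2 : ∀ b, ((l, r + a, c + b) : Node) ∈ T.shape.diagram →
      T.entry (l, r + a, c) ≤ T.entry (l, r + a, c + b) := by
    intro b
    induction b with
    | zero => intro _; exact le_rfl
    | succ b ih =>
      intro h
      exact (ih (dia_le h le_rfl (by omega))).trans (T.row_inc _ _ _ h).le
  exact (h1 a (dia_le h le_rfl (by omega))).trans (h2 b h)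

theorem tab_ext {T U : StdTableau ℓ n} (h1 : T.shape = U.shape) (h2 : T.entry = U.entry) :
    T = U := by
  cases T
  cases U
  simp only at h1 h2
  subst h1 h2
  rfl

theorem toT_surj (T : StdTableau ℓ n) (hT : T.shape = μ) : ∃ x : LinExt (NW μ) n, toT x = T := by
  subst hT
  have hm : ∀ A : Pn T.shape, 1 ≤ T.entry A.1 ∧ T.entry A.1 ≤ n := fun A => by
    simpa using T.bijOn.1 A.2
  let f : Pn T.shape → Fin n := fun A => ⟨T.entry A.1 - 1, by have := hm A; omega⟩
  have hf : Function.Bijective f := by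
    constructor
    · intro A B hAB
      have h1 := hm A
      have h2 := hm B
      simp only [f, Fin.mk.injEq] at hAB
      exact Subtype.ext (T.bijOn.2.1 A.2 B.2 (by omega))
    · intro k
      obtain ⟨A, hA, hk⟩ := T.bijOn.2.2 (show k.1 + 1 ∈ Set.Icc 1 n by
        simp only [Set.mem_Icc]; omega)
      exact ⟨⟨A, hA⟩, Fin.ext (by simp [f, hk])⟩
  have hmono : ∀ A B, NW T.shape A B → Equiv.ofBijective f hf A < Equiv.ofBijective f hf B := by
    intro A B hAB
    have hne : f A ≠ f B := fun h => hAB.2.2.2 (hf.1 h)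
    obtain ⟨⟨l, r, c⟩, h⟩ := A
    obtain ⟨⟨l', r', c'⟩, h'⟩ := B
    obtain ⟨g1, g2, g3, -⟩ := hAB
    simp only at g1 g2 g3
    subst g1
    have := entry_mono T h' g2 g3
    refine lt_of_le_of_ne ?_ hne
    simp only [Equiv.ofBijective_apply, f, Fin.mk_le_mk]
    omega
  refine ⟨⟨Equiv.ofBijective f hf, hmono⟩, ?_⟩
  have hent : entX (μ := T.shape) ⟨Equiv.ofBijective f hf, hmono⟩ = T.entry := by
    funext A
    by_cases hA : A ∈ T.shape.diagram
    · rw [entX_mem _ ⟨A, hA⟩]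
      have := hm ⟨A, hA⟩
      simp only [Equiv.ofBijective_apply, f]
      simp only at this
      omega
    · rw [T.entry_zero A hA, entX, dif_neg hA]
  exact tab_ext rfl hent

theorem toT_res (e : ℕ) (κ : ℕ → ℤ) (x : LinExt (NW μ) n) (k : Fin n) :
    resSeq e κ (toT x) k = resNode e κ (nd x k).1 := by
  simp only [resSeq, content, resNode, toT_node]

theorem toT_deg [Fintype (Pn μ)] (e : ℕ) (he : 2 ≤ e) (κ : ℕ → ℤ)
    (x0 : LinExt (NW μ) n) (hx0 : ∀ A B, x0.1 A < x0.1 B ↔ nodeBelow A.1 B.1)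
    (x : LinExt (NW μ) n) : degE e κ (toT x) = degX e κ x0 x := by
  let S : ℕ → Set Node := fun m => {A | A ∈ μ.diagram ∧ entX x A ≤ m}
  have hS : ∀ m, IsDiagramSet ℓ (S m) := by
    intro m
    refine ⟨?_, ?_, ?_, ?_⟩
    · exact (Set.toFinite μ.diagram).subset (fun A h => h.1)
    · rintro ⟨l, r, c⟩ ⟨h, -⟩
      exact (dia_bd h).1
    · rintro l r c ⟨h, h'⟩
      exact ⟨dia_le h le_rfl (Nat.le_succ c), ((toT x).row_inc l r c h).le.trans h'⟩
    · rintro l r c ⟨h, h'⟩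
      exact ⟨dia_le h (Nat.le_succ r) le_rfl, ((toT x).col_inc l r c h).le.trans h'⟩
  have hrem : ∀ k : Fin n, Removable ℓ (S (k.1 + 1)) (nd x k).1 := by
    intro k
    refine ⟨⟨(nd x k).2, by rw [entX_mem, app_nd]⟩, ?_⟩
    have : S (k.1 + 1) \ {(nd x k).1} = S k.1 := by
      ext A
      simp only [S, Set.mem_sdiff, Set.mem_ofPred_eq, Set.mem_singleton_iff]
      constructor
      · rintro ⟨⟨h1, h2⟩, h3⟩
        refine ⟨h1, ?_⟩
        rw [entX_mem x ⟨A, h1⟩] at h2 ⊢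
        by_contra! h4
        have h5 : x.1 ⟨A, h1⟩ = k := Fin.ext (by omega)
        apply h3
        rw [← h5, nd_app]
      · rintro ⟨h1, h2⟩
        refine ⟨⟨h1, by omega⟩, ?_⟩
        rintro rfl
        rw [entX_mem, app_nd] at h2
        omega
    rw [this]
    exact hS _
  have h1 : degE e κ (toT x) = ∑ k : Fin n, dNode ℓ e κ (S (k.1 + 1)) (nd x k).1 := by
    unfold degE
    have : Finset.Icc 1 n = (Finset.range n).image (fun k => k + 1) := by
      ext m
      simp only [Finset.mem_Icc, Finset.mem_image, Finset.mem_range]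
      constructor
      · intro h; exact ⟨m - 1, by omega, by omega⟩
      · rintro ⟨k, hk, rfl⟩; omega
    rw [this, Finset.sum_image (fun a _ b _ h => by simpa using h), Finset.sum_range]
    apply Finset.sum_congr rfl
    intro k _
    rw [toT_node]
    rfl
  have h2 : ∀ k : Fin n, dNode ℓ e κ (S (k.1 + 1)) (nd x k).1 = headI ℓ e κ (nd x k).1 +
      ∑ B : Pn μ, if (nd x k, B) ∈ invs x0 x then
        nu (resNode e κ B.1 - resNode e κ (nd x k).1) else 0 := by
    intro k
    rw [dNode_formula he κ (hS _) _ (hrem k), ← Finset.sum_filter]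
    congr 1
    symm
    refine Finset.sum_bij (fun B _ => B.1) ?_ ?_ ?_ ?_
    · intro B hB
      simp only [Finset.mem_filter, Finset.mem_univ, true_and, mem_invs, app_nd,
        Set.Finite.mem_toFinset] at hB ⊢
      obtain ⟨h3, h4⟩ := hB
      refine ⟨⟨B.2, ?_⟩, ?_⟩
      · rw [entX_mem]; rw [Fin.lt_def] at h4; omega
      · rw [← hx0]; exact h3
    · intro A _ B _ h
      exact Subtype.ext h
    · intro B hB
      simp only [Finset.mem_filter, Set.Finite.mem_toFinset] at hB
      obtain ⟨⟨h3, h4⟩, h5⟩ := hB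
      refine ⟨⟨B, h3⟩, ?_, rfl⟩
      simp only [Finset.mem_filter, Finset.mem_univ, true_and, mem_invs]
      refine ⟨(hx0 _ _).mpr h5, ?_⟩
      rw [app_nd]
      rw [entX_mem x ⟨B, h3⟩] at h4
      have hne : x.1 ⟨B, h3⟩ ≠ k := by
        rintro h6
        rw [← h6, nd_app] at h5
        exact nodeBelow_irrefl _ h5
      rw [Fin.lt_def]
      have : (x.1 ⟨B, h3⟩).1 ≠ k.1 := fun h => hne (Fin.ext h)
      omega
    · intro B _; rfl
  rw [h1, Finset.sum_congr rfl (fun k _ => h2 k)]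
  have h3 := Equiv.sum_comp x.1.symm (fun A => headI ℓ e κ A.1 +
      ∑ B : Pn μ, if (A, B) ∈ invs x0 x then
        nu (resNode e κ B.1 - resNode e κ A.1) else 0)
  refine Eq.trans h3 ?_
  rw [Finset.sum_add_distrib, degX, ← Finset.sum_product', ← Finset.sum_filter]
  congr 1
  apply Finset.sum_congr
  · ext ⟨A, B⟩; simp
  · intro z _; rfl

theorem main_nonneg (n ℓ e : ℕ) (he : 2 ≤ e) (κ : ℕ → ℤ)
    (μ : Multipartition ℓ n) (i : Fin n → ZMod e) :
    0 ≤ ∑ᶠ T : {T : StdTableau ℓ n // T.shape = μ ∧ resSeq e κ T = i}, degE e κ T.1 := by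
  rcases isEmpty_or_nonempty {T : StdTableau ℓ n // T.shape = μ ∧ resSeq e κ T = i} with h | ⟨⟨T, hT⟩⟩
  · rw [finsum_of_isEmpty]
  · obtain ⟨y, -⟩ := toT_surj T hT.1
    let _ : Fintype (Pn μ) := Fintype.ofEquiv (Fin n) y.1.symm
    have hcard : Fintype.card (Pn μ) = n := by
      rw [Fintype.card_congr y.1, Fintype.card_fin]
    obtain ⟨x0, hx0⟩ := exists_x0 hcard
    have hmain := degX_sum_nonneg e he κ x0 hx0 i
    let F : {x : LinExt (NW μ) n // ∀ k, resNode e κ (nd x k).1 = i k} →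
        {T : StdTableau ℓ n // T.shape = μ ∧ resSeq e κ T = i} :=
      fun x => ⟨toT x.1, rfl, funext fun k => (toT_res e κ x.1 k).trans (x.2 k)⟩
    have hF : Function.Bijective F := by
      constructor
      · intro x y hxy
        exact Subtype.ext (toT_inj (congrArg Subtype.val hxy))
      · rintro ⟨T, hT1, hT2⟩
        obtain ⟨x, hx⟩ := toT_surj T hT1
        refine ⟨⟨x, fun k => ?_⟩, Subtype.ext hx⟩
        rw [← toT_res, hx, hT2]
    have heq := finsum_eq_of_bijective (f := fun x => degX e κ x0 x.1)
      (g := fun T : {T : StdTableau ℓ n // T.shape = μ ∧ resSeq e κ T = i} => degE e κ T.1) F hF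
      (fun x => by
        have h5 := toT_deg e he κ x0 hx0 x.1
        exact h5.symm)
    rw [← heq, finsum_eq_sum_of_fintype]
    convert hmain

end Transfer
end Paper

namespace Paper

/-- for every `e ≥ 2` and residue sequence `i ∈ I^n`,
`deg_{e,i}(λ) = Σ_{T ∈ Std(λ), res(T) = i} deg_e(T) ≥ 0`. -/
theorem deg_res_nonneg (n ℓ e : ℕ) (hℓ : 1 ≤ ℓ) (he : 2 ≤ e) (κ : ℕ → ℤ)
    (μ : Multipartition ℓ n) (i : Fin n → ZMod e) :
    0 ≤ ∑ᶠ T : {T : StdTableau ℓ n // T.shape = μ ∧ resSeq e κ T = i}, degE e κ T.1 := by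
  exact main_nonneg n ℓ e he κ μ i

end Paper
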